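/- arXiv:2506.11872 — 2 statements merged into one kernel-verified Lean document; each statement's English description precedes it below -/
import Mathlib

section
/- Let X be a real Banach space and let M be a multimeasure defined on a σ-algebra Σ such that M(A) is a relatively weakly compact non-empty subset of X for every A ∈ Σ. Then the set ⋃_{A∈Σ} M(A) is relatively weakly compact. -/
/-- The weak topology on `X`: the topology of pointwise convergence on `X*`. -/
def weakTop (X : Type*) [NormedAddCommGroup X] [NormedSpace ℝ X] : TopologicalSpace X :=
  TopologicalSpace.induced (fun x => fun f : X →L[ℝ] ℝ => f x) Pi.topologicalSpace

/-- The support functional `s(x*, C) = sup x*(C)`. -/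
noncomputable def supportFn {X : Type*} [NormedAddCommGroup X] [NormedSpace ℝ X]
    (f : X →L[ℝ] ℝ) (C : Set X) : ℝ := sSup (f '' C)

/-- A set function on a σ-algebra, with values in a topological abelian monoid, is
countably additive. -/
def CountablyAdditive {Ω E : Type*} [MeasurableSpace Ω] [AddCommMonoid E]
    [TopologicalSpace E] (ν : Set Ω → E) : Prop :=
  ∀ A : ℕ → Set Ω, (∀ n, MeasurableSet (A n)) → Pairwise (Function.onFun Disjoint A) →
    HasSum (fun n => ν (A n)) (ν (⋃ n, A n))

/-!
By James' theorem it is enough that every `p ∈ X*` attains its supremum on the union of the weak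
closures of the sets `M A`. The support map `s(p, M)` is a signed measure, so it is maximal at the
positive set `P` of a Hahn decomposition, and `p` attains `s(p, M P)` on the weakly compact closure
of `M P`.

James' theorem is proved by the method of James and Pryce. If a bounded set `S` is not relatively
weakly compact, Grothendieck's double limit construction gives functionals `f n` of norm at most `1`
and points `x n ∈ S` with `f m (x n) = 0` for `n < m` and `f m (x n) > δ` for `m ≤ n`. After passing
to a subsequence (Pryce's lemma), the supremum of `h - F` on `S` depends only on `h` in the span of
the `f n`, and not on the functional `F` asymptotic to the sequence. James' selection argument then
yields `g n ∈ conv {f m | n ≤ m}` such that the suprema on `S` of the partial sums of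
`∑ r ^ n • (g n - F)` increase by at least `r ^ n * α` at each step. If `F` is asymptotic to `(g n)`
and `r` is small, a maximizer `z ∈ S` of the sum would satisfy `F z + κ ≤ g n z` for all `n` and
some `κ > 0`, which is absurd.
-/

open Filter Topology MeasureTheory Set

section SupportFunction

variable {X : Type*} [NormedAddCommGroup X] [NormedSpace ℝ X] {S : Set X} {R : ℝ}

lemma bddAbove_image_of_norm_le (hS : ∀ x ∈ S, ‖x‖ ≤ R) (p : X →L[ℝ] ℝ) : BddAbove (p '' S) := by
  refine ⟨‖p‖ * R, forall_mem_image.2 fun x hx => ?_⟩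
  exact (le_abs_self _).trans (p.le_of_opNorm_le_of_le le_rfl (hS x hx))

lemma le_supportFn (hS : ∀ x ∈ S, ‖x‖ ≤ R) (p : X →L[ℝ] ℝ) {x : X} (hx : x ∈ S) :
    p x ≤ supportFn p S :=
  le_csSup (bddAbove_image_of_norm_le hS p) (mem_image_of_mem p hx)

lemma supportFn_le (hne : S.Nonempty) {p : X →L[ℝ] ℝ} {c : ℝ} (h : ∀ x ∈ S, p x ≤ c) :
    supportFn p S ≤ c :=
  csSup_le (hne.image p) (forall_mem_image.2 h)

lemma supportFn_eq_of_isMaxOn {p : X →L[ℝ] ℝ} {z : X} (hz : z ∈ S) (hmax : IsMaxOn p S z) :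
    supportFn p S = p z :=
  IsGreatest.csSup_eq ⟨mem_image_of_mem p hz, forall_mem_image.2 hmax⟩

lemma supportFn_smul {β : ℝ} (hβ : 0 ≤ β) (p : X →L[ℝ] ℝ) (S : Set X) :
    supportFn (β • p) S = β * supportFn p S := by
  rw [supportFn, supportFn, ← smul_eq_mul, ← Real.sSup_smul_of_nonneg hβ, ← image_smul,
    image_image]
  rfl

lemma convexOn_supportFn (hS : ∀ x ∈ S, ‖x‖ ≤ R) (hne : S.Nonempty) :
    ConvexOn ℝ univ fun p : X →L[ℝ] ℝ => supportFn p S := by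
  refine ⟨convex_univ, fun p _ q _ a b ha hb _ => supportFn_le hne fun x hx => ?_⟩
  exact add_le_add (mul_le_mul_of_nonneg_left (le_supportFn hS p hx) ha)
    (mul_le_mul_of_nonneg_left (le_supportFn hS q hx) hb)

lemma supportFn_le_add_norm_sub (hS : ∀ x ∈ S, ‖x‖ ≤ R) (hne : S.Nonempty) (p q : X →L[ℝ] ℝ) :
    supportFn p S ≤ supportFn q S + R * ‖p - q‖ := by
  refine supportFn_le hne fun x hx => ?_
  have hpq : (p - q) x ≤ ‖p - q‖ * R :=
    (le_abs_self _).trans ((p - q).le_of_opNorm_le_of_le le_rfl (hS x hx))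
  rw [sub_apply] at hpq
  linarith [le_supportFn hS q hx]

lemma continuous_supportFn (hS : ∀ x ∈ S, ‖x‖ ≤ R) (hne : S.Nonempty) :
    Continuous fun p : X →L[ℝ] ℝ => supportFn p S := by
  have hR : 0 ≤ R := hne.elim fun x hx => (norm_nonneg x).trans (hS x hx)
  refine (LipschitzWith.of_le_add_mul ⟨R, hR⟩ fun p q => ?_).continuous
  rw [dist_eq_norm]
  exact supportFn_le_add_norm_sub hS hne p q

end SupportFunction

section WeakCompactness

variable {X : Type*} [NormedAddCommGroup X] [NormedSpace ℝ X] {S T : Set X} {R : ℝ}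

/-- Relative weak compactness of `S`: its closure in the weak topology is weakly compact. -/
def IsRelWeaklyCompact (S : Set X) : Prop :=
  @IsCompact X (weakTop X) (@closure X (weakTop X) S)

lemma IsRelWeaklyCompact.mono (hT : IsRelWeaklyCompact T) (hST : S ⊆ T) :
    IsRelWeaklyCompact S :=
  let := weakTop X
  IsCompact.of_isClosed_subset hT isClosed_closure (closure_mono hST)

lemma continuous_weakTop (p : X →L[ℝ] ℝ) : @Continuous X ℝ (weakTop X) _ p :=
  WeakBilin.eval_continuous (topDualPairing ℝ X).flip p

lemma IsRelWeaklyCompact.isGreatest_supportFn (hS : IsRelWeaklyCompact S) (hne : S.Nonempty)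
    (p : X →L[ℝ] ℝ) : IsGreatest (p '' @closure X (weakTop X) S) (supportFn p S) := by
  let := weakTop X
  obtain ⟨z, hz, hmax⟩ :=
    IsCompact.exists_isMaxOn hS hne.closure (continuous_weakTop p).continuousOn
  have hle : ∀ x ∈ S, p x ≤ p z := fun x hx => hmax (subset_closure hx)
  have hbdd : BddAbove (p '' S) := ⟨p z, forall_mem_image.2 hle⟩
  have hge : ∀ x ∈ closure S, p x ≤ supportFn p S := fun x hx =>
    closure_minimal (fun y hy => le_csSup hbdd (mem_image_of_mem p hy))
      (isClosed_le (continuous_weakTop p) continuous_const) hx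
  exact ⟨⟨z, hz, (hge z hz).antisymm (supportFn_le hne hle)⟩, forall_mem_image.2 hge⟩

-- Helly's lemma: extend the restriction of `ψ` to the common kernel of the `L i` by Hahn–Banach;
-- the extension differs from `ψ` by an element of the span.
lemma exists_mem_ker_lt_apply {ι : Type*} [Finite ι] (L : ι → StrongDual ℝ X)
    (ψ : StrongDual ℝ X) {c d : ℝ} (hc : 0 ≤ c) (hcd : c < d)
    (hd : ∀ w ∈ Submodule.span ℝ (range L), d ≤ ‖ψ - w‖) :
    ∃ e : X, ‖e‖ ≤ 1 ∧ (∀ i, L i e = 0) ∧ c < ψ e := by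
  by_contra! hle
  let N : Submodule ℝ X := ⨅ i, (L i : X →ₗ[ℝ] ℝ).ker
  have hN : ∀ e ∈ N, ∀ i, L i e = 0 := fun e he => by simpa [N] using he
  have hψN : ‖ψ.comp N.subtypeL‖ ≤ c := by
    refine ContinuousLinearMap.opNorm_le_of_unit_norm hc fun e he => abs_le.2 ⟨?_, ?_⟩
    · have := hle (-e) (by simpa using he.le) (by simpa using hN e e.2)
      rw [map_neg] at this
      exact neg_le.1 this
    · exact hle e he.le (hN e e.2)
  obtain ⟨z, hzN, hz⟩ := exists_extension_norm_eq N (ψ.comp N.subtypeL)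
  have hspan : ((ψ - z : StrongDual ℝ X) : X →ₗ[ℝ] ℝ) ∈
      Submodule.span ℝ (range fun i => (L i : X →ₗ[ℝ] ℝ)) := by
    refine mem_span_of_iInf_ker_le_ker fun e he => ?_
    have : z e = ψ e := hzN ⟨e, he⟩
    simp [this]
  have hcoe : range (fun i => (L i : X →ₗ[ℝ] ℝ)) =
      ContinuousLinearMap.coeLM (M := X) (N₃ := ℝ) ℝ '' range L := by
    rw [← range_comp]
    rfl
  rw [hcoe, ← Submodule.map_span] at hspan
  obtain ⟨w, hw, hwz⟩ := hspan
  have hdz : d ≤ ‖ψ - w‖ := hd w hw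
  rw [ContinuousLinearMap.coe_injective hwz, sub_sub_cancel, hz] at hdz
  linarith

lemma exists_mem_closure_forall_le_norm_sub [CompleteSpace X] (hS : ∀ x ∈ S, ‖x‖ ≤ R)
    (hnc : ¬ IsRelWeaklyCompact S) :
    ∃ ψ : StrongDual ℝ (StrongDual ℝ X),
      StrongDual.toWeakDual ψ ∈ closure (NormedSpace.inclusionInDoubleDualWeak ℝ X '' S) ∧
      ∃ d > 0, ∀ x, d ≤ ‖ψ - NormedSpace.inclusionInDoubleDual ℝ X x‖ := by
  have hbdd : Bornology.IsBounded (toWeakSpace ℝ X ⁻¹' S) := isBounded_iff_forall_norm_le.2 ⟨R, hS⟩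
  obtain ⟨ψ, hψS, hψX⟩ := not_subset.1 fun hrange =>
    hnc (NormedSpace.isCompact_closure_of_isBounded ℝ X S hbdd hrange)
  let J := NormedSpace.inclusionInDoubleDualLi (E := X) ℝ
  have hclosed : IsClosed (range J) :=
    J.isometry.isUniformInducing.isComplete_range.isClosed
  have hψJ : WeakDual.toStrongDual ψ ∉ range J := fun ⟨x, hx⟩ =>
    hψX ⟨x, WeakDual.toStrongDual.injective hx⟩
  refine ⟨WeakDual.toStrongDual ψ, hψS, _,
    (hclosed.notMem_iff_infDist_pos (range_nonempty J)).1 hψJ, fun x => ?_⟩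
  exact (Metric.infDist_le_dist_of_mem (mem_range_self x)).trans_eq
    (dist_eq_norm (WeakDual.toStrongDual ψ) (J x))

lemma exists_mem_forall_lt_of_mem_closure {ψ : StrongDual ℝ (StrongDual ℝ X)}
    (hψ : StrongDual.toWeakDual ψ ∈ closure (NormedSpace.inclusionInDoubleDualWeak ℝ X '' S))
    {s : Set (StrongDual ℝ X)} (hs : s.Finite) {c : ℝ} (hc : ∀ f ∈ s, c < ψ f) :
    ∃ x ∈ S, ∀ f ∈ s, c < f x := by
  have hopen : IsOpen (⋂ f ∈ s, {φ : WeakDual ℝ (StrongDual ℝ X) | c < φ f}) :=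
    hs.isOpen_biInter fun f _ => isOpen_lt continuous_const (WeakDual.eval_continuous f)
  obtain ⟨_, hφ, x, hx, rfl⟩ := mem_closure_iff.1 hψ _ hopen (mem_iInter₂.2 hc)
  exact ⟨x, hx, fun f hf => mem_iInter₂.1 hφ f hf⟩

-- The pairs `(f n, x n)` are chosen recursively around a point `ψ` of the weak* closure of `S` in
-- the bidual that lies at positive distance from `X`: `f n` comes from Helly's lemma for
-- `x 0, …, x (n - 1)`, and `x n` approximates `ψ` on `f 0, …, f n`.
lemma exists_array_of_not_isRelWeaklyCompact [CompleteSpace X] (hS : ∀ x ∈ S, ‖x‖ ≤ R)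
    (hnc : ¬ IsRelWeaklyCompact S) :
    ∃ δ > 0, ∃ (f : ℕ → StrongDual ℝ X) (x : ℕ → X), (∀ m, ‖f m‖ ≤ 1) ∧ (∀ n, x n ∈ S) ∧
      (∀ n m, n < m → f m (x n) = 0) ∧ ∀ m n, m ≤ n → δ < f m (x n) := by
  obtain ⟨ψ, hψS, d, hd, hdist⟩ := exists_mem_closure_forall_le_norm_sub hS hnc
  have hstep : ∀ s : Finset (StrongDual ℝ X × X), (∀ a ∈ s, d / 2 < ψ a.1) →
      ∃ f : StrongDual ℝ X, ∃ x ∈ S, ‖f‖ ≤ 1 ∧ d / 2 < ψ f ∧ d / 2 < f x ∧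
        ∀ a ∈ s, f a.2 = 0 ∧ d / 2 < a.1 x := by
    intro s hs
    obtain ⟨f, hf, hfs, hψf⟩ := exists_mem_ker_lt_apply
      (fun a : s => NormedSpace.inclusionInDoubleDual ℝ X a.1.2) ψ
      (half_pos hd).le (half_lt_self hd) fun w hw => by
        have hle : Submodule.span ℝ (range fun a : s =>
            NormedSpace.inclusionInDoubleDual ℝ X a.1.2) ≤
            (NormedSpace.inclusionInDoubleDual ℝ X : X →ₗ[ℝ] _).range :=
          Submodule.span_le.2 (range_subset_iff.2 fun a => ⟨a.1.2, rfl⟩)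
        obtain ⟨x, rfl⟩ := hle hw
        exact hdist x
    obtain ⟨x, hxS, hx⟩ := exists_mem_forall_lt_of_mem_closure hψS
      ((s.finite_toSet.image Prod.fst).insert f)
      (forall_mem_insert.2 ⟨hψf, forall_mem_image.2 hs⟩)
    rw [forall_mem_insert, forall_mem_image] at hx
    exact ⟨f, x, hxS, hf, hψf, hx.1, fun a ha => ⟨hfs ⟨a, ha⟩, hx.2 ha⟩⟩
  obtain ⟨q, hq, hqr⟩ := exists_seq_of_forall_finset_exists
    (fun a : StrongDual ℝ X × X => ‖a.1‖ ≤ 1 ∧ a.2 ∈ S ∧ d / 2 < ψ a.1 ∧ d / 2 < a.1 a.2)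
    (fun a b => b.1 a.2 = 0 ∧ d / 2 < a.1 b.2) fun s hs => by
      obtain ⟨f, x, hxS, hf, hψf, hfx, hs'⟩ := hstep s fun a ha => (hs a ha).2.2.1
      exact ⟨(f, x), ⟨hf, hxS, hψf, hfx⟩, hs'⟩
  refine ⟨d / 2, half_pos hd, fun m => (q m).1, fun n => (q n).2, fun m => (hq m).1,
    fun n => (hq n).2.1, fun n m hnm => (hqr n m hnm).1, fun m n hmn => ?_⟩
  obtain rfl | hmn := hmn.eq_or_lt
  · exact (hq m).2.2.2
  · exact (hqr m n hmn).2

end WeakCompactness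

section AsymptoticHull

variable {X : Type*} [NormedAddCommGroup X] [NormedSpace ℝ X] {f g : ℕ → StrongDual ℝ X}
  {F : StrongDual ℝ X} {x : X} {c C : ℝ}

/-- The functionals whose value at each `x` lies between the lower and the upper limit of `f n x`.
By Hahn–Banach separation this is the intersection of the weak* closed convex hulls of the tails of
`f`; the definition by inequalities is the form in which the hull is used. -/
def asymptoticHull (f : ℕ → StrongDual ℝ X) : Set (StrongDual ℝ X) :=
  {F | ∀ (x : X) (r : ℝ), (∀ᶠ n in atTop, r ≤ f n x) → r ≤ F x}

lemma apply_le_of_mem_asymptoticHull (hF : F ∈ asymptoticHull f)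
    (hc : ∀ᶠ n in atTop, f n x ≤ c) : F x ≤ c := by
  have := hF (-x) (-c) (hc.mono fun n hn => by rwa [map_neg, neg_le_neg_iff])
  rwa [map_neg, neg_le_neg_iff] at this

lemma apply_eq_of_mem_asymptoticHull (hF : F ∈ asymptoticHull f)
    (hc : Tendsto (fun n => f n x) atTop (𝓝 c)) : F x = c := by
  refine le_antisymm (le_of_forall_gt_imp_ge_of_dense fun r hr => ?_)
    (le_of_forall_lt_imp_le_of_dense fun r hr => ?_)
  · exact apply_le_of_mem_asymptoticHull hF (hc.eventually_le_const hr)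
  · exact hF x r (hc.eventually_const_le hr)

lemma norm_le_of_mem_asymptoticHull (hf : ∀ n, ‖f n‖ ≤ C) (hF : F ∈ asymptoticHull f) :
    ‖F‖ ≤ C := by
  refine F.opNorm_le_bound ((norm_nonneg _).trans (hf 0)) fun x => ?_
  have hfx : ∀ n, |f n x| ≤ C * ‖x‖ := fun n => (f n).le_of_opNorm_le (hf n) x
  exact abs_le.2 ⟨hF x _ (Eventually.of_forall fun n => (abs_le.1 (hfx n)).1),
    apply_le_of_mem_asymptoticHull hF (Eventually.of_forall fun n => (abs_le.1 (hfx n)).2)⟩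

lemma asymptoticHull_nonempty (hf : ∀ n, ‖f n‖ ≤ C) : (asymptoticHull f).Nonempty := by
  obtain ⟨F, -, hF⟩ := (WeakDual.isCompact_closedBall (𝕜 := ℝ) (E := X) 0 C).exists_mapClusterPt
    (f := atTop) (u := fun n => StrongDual.toWeakDual (f n))
    (tendsto_principal.2 (Eventually.of_forall fun n => by simpa using hf n))
  refine ⟨WeakDual.toStrongDual F, fun x r hr => ?_⟩
  exact (isClosed_le continuous_const (WeakDual.eval_continuous x)).mem_of_mapClusterPt hF hr

lemma asymptoticHull_subset_of_mem_convexHull (hg : ∀ n, g n ∈ convexHull ℝ (f '' Ici n)) :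
    asymptoticHull g ⊆ asymptoticHull f := by
  intro F hF x r hr
  obtain ⟨N, hN⟩ := eventually_atTop.1 hr
  refine hF x r (eventually_atTop.2 ⟨N, fun n hn => ?_⟩)
  have hconv : Convex ℝ {p : StrongDual ℝ X | r ≤ p x} :=
    convex_halfSpace_ge ⟨fun _ _ => rfl, fun _ _ => rfl⟩ r
  have htail : f '' Ici n ⊆ {p | r ≤ p x} := image_subset_iff.2 fun m hm => hN m (hn.trans hm)
  exact convexHull_min htail hconv (hg n)

end AsymptoticHull

section Pryce

variable {ι κ Y : Type*}

-- Up to `ε`, the value `c` is the largest cluster value of the sequences `a · y` along `L`;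
-- refining `L` can only remove cluster values.
lemma exists_le_tendsto_and_eventually_le [Nonempty Y] {C ε : ℝ} {a : ι → Y → ℝ}
    (ha : ∀ i y, |a i y| ≤ C) (hε : 0 < ε) (L : Filter ι) [L.NeBot] [L.IsCountablyGenerated] :
    ∃ L' ≤ L, (L'.NeBot ∧ L'.IsCountablyGenerated) ∧ ∃ x c,
      Tendsto (fun i => a i x) L' (𝓝 c) ∧ ∀ y, ∀ᶠ i in L', a i y ≤ c + ε := by
  let E : Set ℝ := {r | ∃ y, ∃ᶠ i in L, r ≤ a i y}
  have hEne : E.Nonempty :=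
    ⟨-C, Classical.arbitrary Y, Frequently.of_forall fun i => (abs_le.1 (ha i _)).1⟩
  have hEbdd : BddAbove E := ⟨C, fun r ⟨y, hy⟩ =>
    let ⟨i, hi⟩ := hy.exists
    hi.trans (abs_le.1 (ha i y)).2⟩
  obtain ⟨r, ⟨x, hx⟩, hr⟩ := exists_lt_of_lt_csSup hEne (sub_lt_self (sSup E) hε)
  obtain ⟨c, hcr, hc⟩ := isCompact_Icc.exists_mapClusterPt_of_frequently
    (hx.mono fun i hi => (⟨hi, (abs_le.1 (ha i x)).2⟩ : a i x ∈ Icc r C))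
  refine ⟨comap (fun i => a i x) (𝓝 c) ⊓ L, inf_le_right, ⟨?_, inferInstance⟩, x, c,
    tendsto_comap.mono_left inf_le_left, fun y => ?_⟩
  · exact neBot_inf_comap_iff_map'.2 hc
  by_contra hy
  have hcE : c + ε ∈ E :=
    ⟨y, ((not_eventually.1 hy).filter_mono inf_le_right).mono fun i hi => (not_le.1 hi).le⟩
  linarith [le_csSup hEbdd hcE, hcr.1]

lemma exists_seq_tendsto_and_eventually_le [Nonempty Y] [Countable κ] [Nonempty κ]
    {C ε : κ → ℝ} {a : κ → ι → Y → ℝ} (ha : ∀ k i y, |a k i y| ≤ C k) (hε : ∀ k, 0 < ε k)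
    (L : Filter ι) [hL : L.NeBot] [hL' : L.IsCountablyGenerated] :
    ∃ u : ℕ → ι, Tendsto u atTop L ∧ ∀ k, ∃ x c,
      Tendsto (fun n => a k (u n) x) atTop (𝓝 c) ∧ ∀ y, ∀ᶠ n in atTop, a k (u n) y ≤ c + ε k := by
  obtain ⟨e, he⟩ := exists_surjective_nat κ
  have hstep : ∀ (n : ℕ) (G : {G : Filter ι // G.NeBot ∧ G.IsCountablyGenerated}),
      ∃ G' : {G : Filter ι // G.NeBot ∧ G.IsCountablyGenerated}, G'.1 ≤ G.1 ∧ ∃ x c,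
        Tendsto (fun i => a (e n) i x) G'.1 (𝓝 c) ∧
          ∀ y, ∀ᶠ i in G'.1, a (e n) i y ≤ c + ε (e n) := by
    rintro n ⟨G, hG, hG'⟩
    obtain ⟨G', hle, hG', hxc⟩ := exists_le_tendsto_and_eventually_le (ha (e n)) (hε (e n)) G
    exact ⟨⟨G', hG'⟩, hle, hxc⟩
  choose next hnext_le hnext using hstep
  let G (n : ℕ) : {G : Filter ι // G.NeBot ∧ G.IsCountablyGenerated} :=
    Nat.rec ⟨L, hL, hL'⟩ next n
  have hanti : Antitone fun n => (G n).1 := antitone_nat_of_succ_le fun n => hnext_le n (G n)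
  have hne : (⨅ n, (G n).1).NeBot := iInf_neBot_of_directed' hanti.directed_ge fun n => (G n).2.1
  have hcg : ∀ n, (G n).1.IsCountablyGenerated := fun n => (G n).2.2
  obtain ⟨u, hu⟩ := exists_seq_tendsto (⨅ n, (G n).1)
  have huG : ∀ n, Tendsto u atTop (G n).1 := fun n => hu.mono_right (iInf_le _ n)
  refine ⟨u, huG 0, fun k => ?_⟩
  obtain ⟨n, rfl⟩ := he k
  obtain ⟨x, c, hx, hle⟩ := hnext n (G n)
  exact ⟨x, c, hx.comp (huG (n + 1)), fun y => (huG (n + 1)).eventually (hle y)⟩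

variable {X : Type*} [NormedAddCommGroup X] [NormedSpace ℝ X] {S : Set X} {R K : ℝ}
  {f : ℕ → StrongDual ℝ X}

lemma supportFn_sub_le_add {F G h : StrongDual ℝ X} (hS : ∀ x ∈ S, ‖x‖ ≤ R)
    (hF : F ∈ asymptoticHull f) (hG : G ∈ asymptoticHull f) {x : X} (hxS : x ∈ S) {c ε : ℝ}
    (hx : Tendsto (fun n => (h - f n) x) atTop (𝓝 c))
    (hle : ∀ y ∈ S, ∀ᶠ n in atTop, (h - f n) y ≤ c + ε) :
    supportFn (h - F) S ≤ supportFn (h - G) S + ε := by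
  have hc : (h - G) x = c := by
    have hfx : Tendsto (fun n => f n x) atTop (𝓝 (h x - c)) := by
      simpa using hx.const_sub (h x)
    rw [sub_apply, apply_eq_of_mem_asymptoticHull hG hfx, sub_sub_cancel]
  refine supportFn_le ⟨x, hxS⟩ fun y hy => ?_
  have hFy : h y - (c + ε) ≤ F y := hF y _ ((hle y hy).mono fun n hn => by
    rw [sub_apply] at hn
    linarith)
  have hGx : (h - G) x ≤ supportFn (h - G) S := le_supportFn hS _ hxS
  rw [sub_apply]
  linarith

lemma exists_tendsto_atTop_supportFn_sub_eq (hS : ∀ x ∈ S, ‖x‖ ≤ R) (hne : S.Nonempty)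
    (hf : ∀ n, ‖f n‖ ≤ K) : ∃ u : ℕ → ℕ, Tendsto u atTop atTop ∧
      ∀ h ∈ Submodule.span ℝ (range f), ∀ F ∈ asymptoticHull (f ∘ u),
        ∀ G ∈ asymptoticHull (f ∘ u), supportFn (h - F) S = supportFn (h - G) S := by
  obtain ⟨D, hD, hspan⟩ := (countable_range f).isSeparable.span (R := ℝ)
  have := hne.to_subtype
  have := hD.to_subtype
  have : Nonempty D := (closure_nonempty_iff.1 ⟨0, hspan (zero_mem _)⟩).to_subtype
  obtain ⟨u, hu, huD⟩ := exists_seq_tendsto_and_eventually_le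
    (a := fun (k : D × ℕ) n (y : S) => (k.1 - f n) y) (C := fun k => (‖k.1.1‖ + K) * R)
    (ε := fun k => 1 / ((k.2 : ℝ) + 1))
    (fun k n y => (k.1.1 - f n).le_of_opNorm_le_of_le
      ((norm_sub_le _ _).trans (by gcongr; exact hf n)) (hS y y.2))
    (fun k => Nat.one_div_pos_of_nat) atTop
  have hle : ∀ h ∈ D, ∀ F ∈ asymptoticHull (f ∘ u), ∀ G ∈ asymptoticHull (f ∘ u),
      supportFn (h - F) S ≤ supportFn (h - G) S := by
    intro h hh F hF G hG
    refine le_of_forall_pos_le_add fun ε hε => ?_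
    obtain ⟨m, hm⟩ := exists_nat_one_div_lt hε
    obtain ⟨x, c, hx, hc⟩ := huD (⟨h, hh⟩, m)
    exact (supportFn_sub_le_add hS hF hG x.2 hx fun y hy => hc ⟨y, hy⟩).trans (by gcongr)
  refine ⟨u, hu, fun h hh F hF G hG => ?_⟩
  have hcont : ∀ H : StrongDual ℝ X, Continuous fun h : StrongDual ℝ X => supportFn (h - H) S :=
    fun H => (continuous_supportFn hS hne).comp (continuous_id.sub continuous_const)
  exact closure_minimal (fun d hd => (hle d hd F hF G hG).antisymm (hle d hd G hG F hF))
    (isClosed_eq (hcont F) (hcont G)) (hspan hh)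

end Pryce

section Selection

variable {E : Type*} [AddCommGroup E] [Module ℝ E] {p : E → ℝ}

lemma mul_sub_le_mul_sub_of_convexOn (hp : ConvexOn ℝ univ p) (u b : E) {s t : ℝ} (hs : 0 ≤ s)
    (hst : s ≤ t) (ht : 0 < t) : t * (p (u + s • b) - p u) ≤ s * (p (u + t • b) - p u) := by
  have hconv := hp.2 (mem_univ u) (mem_univ (u + t • b)) (sub_nonneg.2 ((div_le_one ht).2 hst))
    (div_nonneg hs ht.le) (sub_add_cancel 1 (s / t))
  have hcomb : (1 - s / t) • u + (s / t) • (u + t • b) = u + s • b := by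
    rw [smul_add, smul_smul, div_mul_cancel₀ s ht.ne', ← add_assoc, ← add_smul, sub_add_cancel,
      one_smul]
  rw [hcomb, smul_eq_mul, smul_eq_mul] at hconv
  calc t * (p (u + s • b) - p u)
      ≤ t * ((1 - s / t) * p u + s / t * p (u + t • b) - p u) := by gcongr
    _ = s * (p (u + t • b) - p u) := by field_simp; ring

-- James' selection step: take `a₀` that almost minimizes `p (u + β • a₀)`. The point
-- `u + β • a₀ + β' • a` lies on the ray from `u` through `u + β • b` with `b ∈ A`, along which the
-- convex function `p` keeps growing at rate at least `α'`.
lemma exists_mem_forall_add_mul_le (hp : ConvexOn ℝ univ p) {A : Set E} (hA : Convex ℝ A)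
    (hne : A.Nonempty) {α β β' : ℝ} (hβ : 0 < β) (hβ' : 0 < β') {u : E}
    (hu : ∃ α' > α, ∀ a ∈ A, p u + β * α' ≤ p (u + β • a)) :
    ∃ a₀ ∈ A, ∃ α' > α, ∀ a ∈ A, p (u + β • a₀) + β' * α' ≤ p (u + β • a₀ + β' • a) := by
  obtain ⟨α', hα, hα'⟩ := hu
  let I := sInf ((fun a => p (u + β • a)) '' A)
  have hI : p u + β * α' ≤ I := le_csInf (hne.image _) (forall_mem_image.2 hα')
  have hIle : ∀ a ∈ A, I ≤ p (u + β • a) := fun a ha =>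
    csInf_le ⟨_, forall_mem_image.2 hα'⟩ (mem_image_of_mem _ ha)
  have hη : 0 < β' * ((α' - α) / 2) := mul_pos hβ' (half_pos (sub_pos.2 hα))
  obtain ⟨_, ⟨a₀, ha₀, rfl⟩, hlt⟩ := exists_lt_of_csInf_lt (hne.image _) (lt_add_of_pos_right I hη)
  refine ⟨a₀, ha₀, (α + α') / 2, by linarith, fun a ha => ?_⟩
  have hsum : 0 < β + β' := add_pos hβ hβ'
  let b := (β / (β + β')) • a₀ + (β' / (β + β')) • a
  have hb : b ∈ A := hA ha₀ ha (by positivity) (by positivity) (by field_simp)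
  have hray : (β + β') * (p (u + β • b) - p u) ≤ β * (p (u + β • a₀ + β' • a) - p u) := by
    have hcomb : u + (β + β') • b = u + β • a₀ + β' • a := by
      rw [smul_add, smul_smul, smul_smul, mul_div_cancel₀ _ hsum.ne', mul_div_cancel₀ _ hsum.ne',
        add_assoc]
    rw [← hcomb]
    exact mul_sub_le_mul_sub_of_convexOn hp u b hβ.le (by linarith) hsum
  have hbound : β * (I + β' * α') ≤ β * p (u + β • a₀ + β' • a) := by
    nlinarith [hIle b hb]
  linarith [le_of_mul_le_mul_left hbound hβ]

lemma exists_seq_add_mul_le (hp : ConvexOn ℝ univ p) {A : ℕ → Set E} (hA : Antitone A)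
    (hconv : ∀ n, Convex ℝ (A n)) (hne : ∀ n, (A n).Nonempty) {α : ℝ} {β : ℕ → ℝ}
    (hβ : ∀ n, 0 < β n) (h₀ : ∃ α' > α, ∀ a ∈ A 0, p 0 + β 0 * α' ≤ p (β 0 • a)) :
    ∃ v : ℕ → E, (∀ n, v n ∈ A n) ∧ ∀ n, p (∑ i ∈ Finset.range n, β i • v i) + β n * α ≤
      p (∑ i ∈ Finset.range (n + 1), β i • v i) := by
  let Admissible (n : ℕ) (u : E) : Prop := ∃ α' > α, ∀ a ∈ A n, p u + β n * α' ≤ p (u + β n • a)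
  have hstep : ∀ n u, Admissible n u → ∃ a ∈ A n, Admissible (n + 1) (u + β n • a) := by
    intro n u hu
    obtain ⟨a, ha, α', hα, hα'⟩ :=
      exists_mem_forall_add_mul_le hp (hconv n) (hne n) (hβ n) (hβ (n + 1)) hu
    exact ⟨a, ha, α', hα, fun a' ha' => hα' a' (hA n.le_succ ha')⟩
  choose! next hmem hnext using hstep
  let u (n : ℕ) : E := Nat.rec 0 (fun n u => u + β n • next n u) n
  have hu : ∀ n, Admissible n (u n) := by
    intro n
    induction n with
    | zero => simpa [Admissible, u] using h₀
    | succ n ih => exact hnext n _ ih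
  have hsum : ∀ n, ∑ i ∈ Finset.range n, β i • next i (u i) = u n := by
    intro n
    induction n with
    | zero => rfl
    | succ n ih => rw [Finset.sum_range_succ, ih]
  refine ⟨fun n => next n (u n), fun n => hmem n _ (hu n), fun n => ?_⟩
  rw [hsum, hsum]
  obtain ⟨α', hα, hα'⟩ := hu n
  calc p (u n) + β n * α ≤ p (u n) + β n * α' := by gcongr; exact (hβ n).le
    _ ≤ p (u (n + 1)) := hα' _ (hmem n _ (hu n))

end Selection

section James

variable {X : Type*} [NormedAddCommGroup X] [NormedSpace ℝ X] {S : Set X} {R C α δ : ℝ}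
  {f : ℕ → StrongDual ℝ X}

lemma pow_mul_sub_le_apply_of_isMaxOn {v : ℕ → StrongDual ℝ X} {w : StrongDual ℝ X} {r : ℝ} {z : X}
    (hS : ∀ x ∈ S, ‖x‖ ≤ R) (hr : r < 1) (hv : ∀ n, ‖v n‖ ≤ C * r ^ n) (hw : HasSum v w)
    (hgrow : ∀ n, supportFn (∑ i ∈ Finset.range n, v i) S + r ^ n * α ≤
      supportFn (∑ i ∈ Finset.range (n + 1), v i) S)
    (hz : z ∈ S) (hmax : IsMaxOn w S z) (n : ℕ) :
    r ^ n * (α - 2 * (R * C * r / (1 - r))) ≤ v n z := by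
  let s (n : ℕ) : StrongDual ℝ X := ∑ i ∈ Finset.range n, v i
  have hdist : R * ‖s (n + 1) - w‖ ≤ r ^ n * (R * C * r / (1 - r)) :=
    calc R * ‖s (n + 1) - w‖ ≤ R * (C * r ^ (n + 1) / (1 - r)) :=
          mul_le_mul_of_nonneg_left (norm_sub_le_of_geometric_bound_of_hasSum hr hv hw (n + 1))
            ((norm_nonneg z).trans (hS z hz))
      _ = r ^ n * (R * C * r / (1 - r)) := by ring
  have hsup : supportFn (s (n + 1)) S ≤ w z + R * ‖s (n + 1) - w‖ := by
    rw [← supportFn_eq_of_isMaxOn hz hmax]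
    exact supportFn_le_add_norm_sub hS ⟨z, hz⟩ _ _
  have hwz : w z - s (n + 1) z ≤ R * ‖s (n + 1) - w‖ := by
    rw [norm_sub_rev, mul_comm]
    exact (le_abs_self _).trans ((w - s (n + 1)).le_of_opNorm_le_of_le le_rfl (hS z hz))
  have hsn : s n z ≤ supportFn (s n) S := le_supportFn hS _ hz
  have hvz : s (n + 1) z = s n z + v n z := by simp [s, Finset.sum_range_succ]
  linarith [hgrow n]

lemma le_supportFn_sub_of_array {x : ℕ → X} {F g : StrongDual ℝ X} (hS : ∀ x ∈ S, ‖x‖ ≤ R)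
    (hx : ∀ n, x n ∈ S) (hzero : ∀ n, ∀ᶠ m in atTop, f m (x n) = 0)
    (hδ : ∀ m, ∀ᶠ n in atTop, δ ≤ f m (x n)) (hF : F ∈ asymptoticHull f)
    (hg : g ∈ convexHull ℝ (range f)) : δ ≤ supportFn (g - F) S := by
  have hconv : Convex ℝ {p : StrongDual ℝ X | ∀ᶠ n in atTop, δ ≤ p (x n)} := by
    intro p hp q hq a b ha hb hab
    filter_upwards [hp, hq] with n hpn hqn using convex_Ici δ hpn hqn ha hb hab
  have hrange : range f ⊆ {p | ∀ᶠ n in atTop, δ ≤ p (x n)} := range_subset_iff.2 hδ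
  obtain ⟨n, hn⟩ := (convexHull_min hrange hconv hg).exists
  have hFx : F (x n) = 0 :=
    apply_eq_of_mem_asymptoticHull hF (tendsto_nhds_of_eventually_eq (hzero n))
  calc δ ≤ (g - F) (x n) := by rwa [sub_apply, hFx, sub_zero]
    _ ≤ supportFn (g - F) S := le_supportFn hS _ (hx n)

lemma supportFn_sum_smul_sub_eq {ι : Type*} {F G : StrongDual ℝ X} {g : ι → StrongDual ℝ X}
    {β : ι → ℝ} {H : Set (StrongDual ℝ X)} (hH : Convex ℝ H)
    (hFG : ∀ h ∈ H, supportFn (h - F) S = supportFn (h - G) S) (hβ : ∀ i, 0 < β i)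
    (hg : ∀ i, g i ∈ H) (s : Finset ι) :
    supportFn (∑ i ∈ s, β i • (g i - F)) S = supportFn (∑ i ∈ s, β i • (g i - G)) S := by
  obtain rfl | hs := s.eq_empty_or_nonempty
  · rfl
  have hpos : 0 < ∑ i ∈ s, β i := Finset.sum_pos (fun i _ => hβ i) hs
  have hcenter : ∀ P : StrongDual ℝ X,
      ∑ i ∈ s, β i • (g i - P) = (∑ i ∈ s, β i) • (s.centerMass β g - P) := by
    intro P
    rw [Finset.centerMass, smul_sub, smul_inv_smul₀ hpos.ne', Finset.sum_smul,
      ← Finset.sum_sub_distrib]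
    exact Finset.sum_congr rfl fun i _ => smul_sub _ _ _
  rw [hcenter, hcenter, supportFn_smul hpos.le, supportFn_smul hpos.le,
    hFG _ (hH.centerMass_mem (fun i _ => (hβ i).le) hpos fun i _ => hg i)]

lemma exists_seq_convexHull_supportFn_add_le (hS : ∀ x ∈ S, ‖x‖ ≤ R) (hne : S.Nonempty)
    (hf : ∀ n, ‖f n‖ ≤ C) (hα : α < δ)
    (hδ : ∀ g ∈ convexHull ℝ (range f), ∀ F ∈ asymptoticHull f, δ ≤ supportFn (g - F) S)
    (heq : ∀ g ∈ convexHull ℝ (range f), ∀ F ∈ asymptoticHull f, ∀ G ∈ asymptoticHull f,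
      supportFn (g - F) S = supportFn (g - G) S) {β : ℕ → ℝ} (hβ : ∀ n, 0 < β n) :
    ∃ g : ℕ → StrongDual ℝ X, (∀ n, g n ∈ convexHull ℝ (f '' Ici n)) ∧
      ∀ F ∈ asymptoticHull f, ∀ n,
        supportFn (∑ i ∈ Finset.range n, β i • (g i - F)) S + β n * α ≤
          supportFn (∑ i ∈ Finset.range (n + 1), β i • (g i - F)) S := by
  obtain ⟨F₀, hF₀⟩ := asymptoticHull_nonempty hf
  have hsub : ∀ n, convexHull ℝ (f '' Ici n) ⊆ convexHull ℝ (range f) := fun n =>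
    convexHull_mono (image_subset_range f _)
  have hbase : ∀ a ∈ (fun v => v + F₀) ⁻¹' convexHull ℝ (f '' Ici 0),
      supportFn 0 S + β 0 * δ ≤ supportFn (β 0 • a) S := by
    intro a ha
    have hzero : supportFn (0 : StrongDual ℝ X) S = 0 := by
      simpa using supportFn_smul le_rfl (0 : StrongDual ℝ X) S
    have hδa : δ ≤ supportFn a S := by simpa using hδ _ (hsub 0 ha) F₀ hF₀
    rw [hzero, zero_add, supportFn_smul (hβ 0).le]
    exact mul_le_mul_of_nonneg_left hδa (hβ 0).le
  obtain ⟨v, hv, hgrow⟩ := exists_seq_add_mul_le (convexOn_supportFn hS hne)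
    (A := fun n => (fun v => v + F₀) ⁻¹' convexHull ℝ (f '' Ici n))
    (fun m n hmn => preimage_mono (convexHull_mono (image_mono (Ici_subset_Ici.2 hmn))))
    (fun n => (convex_convexHull ℝ _).translate_preimage_left F₀)
    (fun n => ⟨f n - F₀, subset_convexHull ℝ _ ⟨n, self_mem_Ici, (sub_add_cancel _ _).symm⟩⟩)
    hβ ⟨δ, hα, hbase⟩
  refine ⟨fun n => v n + F₀, hv, fun F hF n => ?_⟩
  simp only [supportFn_sum_smul_sub_eq (convex_convexHull ℝ (range f))
    (fun h hh => heq h hh F hF F₀ hF₀) hβ (fun i => hsub i (hv i)), add_sub_cancel_right]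
  exact hgrow n

lemma exists_two_mul_div_one_sub_lt {D : ℝ} (hD : 0 ≤ D) (hα : 0 < α) :
    ∃ r, 0 < r ∧ r < 1 ∧ 2 * (D * r / (1 - r)) < α := by
  refine ⟨α / (2 * α + 4 * D), by positivity, (div_lt_one (by positivity)).2 (by linarith), ?_⟩
  have hsub : 1 - α / (2 * α + 4 * D) = (α + 4 * D) / (2 * α + 4 * D) := by
    field_simp
    ring
  rw [hsub, mul_div_assoc, div_div_div_cancel_right₀ (by positivity), mul_div_assoc',
    mul_div_assoc', div_lt_iff₀ (by positivity)]
  nlinarith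

lemma exists_forall_not_isMaxOn (hS : ∀ x ∈ S, ‖x‖ ≤ R) (hne : S.Nonempty)
    (hf : ∀ n, ‖f n‖ ≤ C) (hδ₀ : 0 < δ)
    (hδ : ∀ g ∈ convexHull ℝ (range f), ∀ F ∈ asymptoticHull f, δ ≤ supportFn (g - F) S)
    (heq : ∀ g ∈ convexHull ℝ (range f), ∀ F ∈ asymptoticHull f, ∀ G ∈ asymptoticHull f,
      supportFn (g - F) S = supportFn (g - G) S) :
    ∃ p : StrongDual ℝ X, ∀ z ∈ S, ¬ IsMaxOn p S z := by
  have hR : 0 ≤ R := hne.elim fun x hx => (norm_nonneg x).trans (hS x hx)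
  have hC : 0 ≤ C := (norm_nonneg _).trans (hf 0)
  obtain ⟨r, hr₀, hr₁, hr⟩ := exists_two_mul_div_one_sub_lt (D := R * (C + C)) (by positivity)
    (half_pos hδ₀)
  obtain ⟨g, hgf, hgrow⟩ := exists_seq_convexHull_supportFn_add_le hS hne hf (half_lt_self hδ₀)
    hδ heq (β := fun n => r ^ n) fun n => pow_pos hr₀ n
  have hg : ∀ n, ‖g n‖ ≤ C := fun n => by
    have hball : f '' Ici n ⊆ Metric.closedBall 0 C :=
      image_subset_iff.2 fun m _ => mem_closedBall_zero_iff.2 (hf m)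
    exact mem_closedBall_zero_iff.1 (convexHull_min hball (convex_closedBall 0 C) (hgf n))
  obtain ⟨F, hF⟩ := asymptoticHull_nonempty hg
  have hv : ∀ n, ‖r ^ n • (g n - F)‖ ≤ (C + C) * r ^ n := fun n => by
    rw [norm_smul, Real.norm_of_nonneg (by positivity), mul_comm]
    gcongr
    exact norm_sub_le_of_le (hg n) (norm_le_of_mem_asymptoticHull hg hF)
  have hsum : Summable fun n => r ^ n • (g n - F) :=
    .of_norm_bounded ((summable_geometric_of_lt_one hr₀.le hr₁).mul_left _) hv
  refine ⟨∑' n, r ^ n • (g n - F), fun z hz hmax => ?_⟩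
  have hgz : ∀ n, F z + (δ / 2 - 2 * (R * (C + C) * r / (1 - r))) ≤ g n z := fun n => by
    have := pow_mul_sub_le_apply_of_isMaxOn hS hr₁ hv hsum.hasSum
      (hgrow F (asymptoticHull_subset_of_mem_convexHull hgf hF)) hz hmax n
    rw [smul_apply, smul_eq_mul, sub_apply] at this
    linarith [le_of_mul_le_mul_left this (pow_pos hr₀ n)]
  linarith [hF z _ (Eventually.of_forall hgz)]

lemma exists_forall_norm_le_of_bddAbove_image (hS : ∀ p : StrongDual ℝ X, BddAbove (p '' S)) :
    ∃ R, ∀ x ∈ S, ‖x‖ ≤ R := by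
  obtain ⟨R, hR⟩ := banach_steinhaus
    (g := fun x : S => NormedSpace.inclusionInDoubleDual ℝ X x) fun p => by
      obtain ⟨a, ha⟩ := hS p
      obtain ⟨b, hb⟩ := hS (-p)
      rw [mem_upperBounds, forall_mem_image] at ha hb
      exact ⟨max a b, fun x => max_le_max (ha x.2) (hb x.2)⟩
  exact ⟨R, fun x hx => ((NormedSpace.inclusionInDoubleDualLi ℝ).norm_map x).ge.trans (hR ⟨x, hx⟩)⟩

theorem isRelWeaklyCompact_of_forall_exists_isMaxOn [CompleteSpace X]
    (hS : ∀ p : StrongDual ℝ X, ∃ z ∈ S, IsMaxOn p S z) : IsRelWeaklyCompact S := by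
  obtain ⟨R, hR⟩ := exists_forall_norm_le_of_bddAbove_image fun p =>
    let ⟨z, _, hz⟩ := hS p
    ⟨p z, forall_mem_image.2 hz⟩
  by_contra hnc
  obtain ⟨δ, hδ, f, x, hf, hx, hzero, hfx⟩ := exists_array_of_not_isRelWeaklyCompact hR hnc
  obtain ⟨u, hu, heq⟩ := exists_tendsto_atTop_supportFn_sub_eq hR ⟨x 0, hx 0⟩ hf
  have hspan : convexHull ℝ (range (f ∘ u)) ⊆ Submodule.span ℝ (range f) :=
    convexHull_min ((range_comp_subset_range u f).trans Submodule.subset_span)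
      (Submodule.convex _)
  obtain ⟨p, hp⟩ := exists_forall_not_isMaxOn hR ⟨x 0, hx 0⟩ (fun n => hf (u n)) hδ
    (fun g hg F hF => le_supportFn_sub_of_array hR hx
      (fun n => hu.eventually ((eventually_gt_atTop n).mono fun m => hzero n m))
      (fun m => (eventually_ge_atTop (u m)).mono fun n hn => (hfx (u m) n hn).le) hF hg)
    (fun h hh => heq h (hspan hh))
  obtain ⟨z, hz, hmax⟩ := hS p
  exact hp z hz hmax

end James

section SignedMeasure

variable {Ω : Type*} [MeasurableSpace Ω]

open scoped Classical in
/-- A countably additive set function on a σ-algebra as a vector measure, extended by zero to the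
non-measurable sets. -/
noncomputable def CountablyAdditive.toVectorMeasure {E : Type*} [AddCommGroup E]
    [TopologicalSpace E] [IsTopologicalAddGroup E] [T2Space E] {ν : Set Ω → E}
    (hν : CountablyAdditive ν) : VectorMeasure Ω E where
  measureOf' A := if MeasurableSet A then ν A else 0
  empty' := by
    have hconst := hν (fun _ => ∅) (fun _ => .empty) fun _ _ _ => disjoint_bot_left
    rw [if_pos .empty]
    exact tendsto_nhds_unique tendsto_const_nhds hconst.summable.tendsto_atTop_zero
  not_measurable' _ hA := if_neg hA
  m_iUnion' A hA hdisj := by simpa [hA, MeasurableSet.iUnion hA] using hν A hA hdisj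

lemma CountablyAdditive.toVectorMeasure_apply {E : Type*} [AddCommGroup E]
    [TopologicalSpace E] [IsTopologicalAddGroup E] [T2Space E] {ν : Set Ω → E}
    (hν : CountablyAdditive ν) {A : Set Ω} (hA : MeasurableSet A) : hν.toVectorMeasure A = ν A :=
  if_pos hA

lemma exists_measurableSet_forall_apply_le (s : SignedMeasure Ω) :
    ∃ P, MeasurableSet P ∧ ∀ A, MeasurableSet A → s A ≤ s P := by
  obtain ⟨P, hP, hpos, hneg⟩ := s.exists_compl_positive_negative
  refine ⟨P, hP, fun A hA => ?_⟩
  have hsplitA : s (A ∩ P) + s (A \ P) = s A := by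
    simpa using s.of_add_of_sdiff (hA.inter hP) hA inter_subset_left
  have hsplitP : s (A ∩ P) + s (P \ A) = s P := by
    simpa using s.of_add_of_sdiff (hA.inter hP) hP inter_subset_right
  have hA_le : s (A \ P) ≤ 0 :=
    VectorMeasure.subset_le_of_restrict_le_restrict s 0 hP.compl hneg fun _ h => h.2
  have hP_ge : 0 ≤ s (P \ A) :=
    VectorMeasure.subset_le_of_restrict_le_restrict 0 s hP hpos sdiff_subset
  linarith

lemma CountablyAdditive.exists_measurableSet_forall_le {ν : Set Ω → ℝ}
    (hν : CountablyAdditive ν) : ∃ P, MeasurableSet P ∧ ∀ A, MeasurableSet A → ν A ≤ ν P := by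
  obtain ⟨P, hP, hmax⟩ := exists_measurableSet_forall_apply_le hν.toVectorMeasure
  refine ⟨P, hP, fun A hA => ?_⟩
  rw [← hν.toVectorMeasure_apply hA, ← hν.toVectorMeasure_apply hP]
  exact hmax A hA

end SignedMeasure

/-- Let `X` be a Banach space and `M` a multimeasure on a σ-algebra
`Σ` whose values are relatively weakly compact non-empty subsets of `X`. Then
`⋃_{A ∈ Σ} M(A)` is relatively weakly compact. -/
theorem statement12 {Ω X : Type*} [MeasurableSpace Ω]
    [NormedAddCommGroup X] [NormedSpace ℝ X] [CompleteSpace X]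
    (M : Set Ω → Set X)
    (hne : ∀ A : Set Ω, MeasurableSet A → (M A).Nonempty)
    (hcpt : ∀ A : Set Ω, MeasurableSet A →
      @IsCompact X (weakTop X) (@closure X (weakTop X) (M A)))
    (hca : ∀ f : X →L[ℝ] ℝ, CountablyAdditive (fun A => supportFn f (M A))) :
    @IsCompact X (weakTop X)
      (@closure X (weakTop X) (⋃ (A : Set Ω) (_ : MeasurableSet A), M A)) := by
  refine IsRelWeaklyCompact.mono (T := ⋃ (A) (_ : MeasurableSet A), @closure X (weakTop X) (M A))
    (isRelWeaklyCompact_of_forall_exists_isMaxOn fun p => ?_)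
    (iUnion₂_mono fun A _ => @subset_closure X (weakTop X) (M A))
  have hgreatest : ∀ A, MeasurableSet A →
      IsGreatest (p '' @closure X (weakTop X) (M A)) (supportFn p (M A)) := fun A hA =>
    IsRelWeaklyCompact.isGreatest_supportFn (hcpt A hA) (hne A hA) p
  obtain ⟨P, hP, hmax⟩ := (hca p).exists_measurableSet_forall_le
  obtain ⟨z, hz, hzP⟩ := (hgreatest P hP).1
  refine ⟨z, mem_iUnion₂.2 ⟨P, hP, hz⟩, fun x hx => ?_⟩
  obtain ⟨A, hA, hxA⟩ := mem_iUnion₂.1 hx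
  calc p x ≤ supportFn p (M A) := (hgreatest A hA).2 (mem_image_of_mem p hxA)
    _ ≤ supportFn p (M P) := hmax A hA
    _ = p z := hzP.symm
end

section
/- Let X be a real Banach space and let Y ⊆ X* be a total linear subspace having the Orlicz-Thomas property such that X equipped with the Mackey topology μ(X,Y) is quasi-complete. Let M : Σ → b(X) be a set-valued map defined on a σ-algebra Σ such that: (i) M(A) is relatively σ(X,Y)-compact for every A ∈ Σ; (ii) the support map s(x*,M) is countably additive for every x* ∈ Y; and (iii) s(x*,M) is finitely additive for every x* ∈ X*. Then M is a multimeasure, i.e., s(x*,M) is countably additive for every x* ∈ X*. -/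
/-- The topology `σ(X, Y)` of pointwise convergence on a set `Y ⊆ X*`. -/
def sigmaTop {X : Type*} [NormedAddCommGroup X] [NormedSpace ℝ X]
    (Y : Set (X →L[ℝ] ℝ)) : TopologicalSpace X :=
  TopologicalSpace.induced (fun x => fun y : Y => (y : X →L[ℝ] ℝ) x) Pi.topologicalSpace

/-- The weak* topology on `X*`: pointwise convergence on `X`. -/
def weakStarTop (X : Type*) [NormedAddCommGroup X] [NormedSpace ℝ X] :
    TopologicalSpace (X →L[ℝ] ℝ) :=
  TopologicalSpace.induced (fun f : X →L[ℝ] ℝ => fun x : X => f x) Pi.topologicalSpace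

/-- The family of absolutely convex, weak*-compact subsets of `Y ⊆ X*`. -/
def mackeyFamily {X : Type*} [NormedAddCommGroup X] [NormedSpace ℝ X]
    (Y : Submodule ℝ (X →L[ℝ] ℝ)) : Set (Set (X →L[ℝ] ℝ)) :=
  {S | S ⊆ (Y : Set (X →L[ℝ] ℝ)) ∧ Convex ℝ S ∧ Balanced ℝ S ∧
    @IsCompact (X →L[ℝ] ℝ) (weakStarTop X) S}

/-- The Mackey uniformity `μ(X, Y)`: uniform convergence on absolutely convex
weak*-compact subsets of `Y`. -/
noncomputable def mackeyUniformity {X : Type*} [NormedAddCommGroup X] [NormedSpace ℝ X]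
    (Y : Submodule ℝ (X →L[ℝ] ℝ)) : UniformSpace X :=
  UniformSpace.comap
    (fun x => UniformOnFun.ofFun (mackeyFamily Y) (fun f : X →L[ℝ] ℝ => f x))
    (UniformOnFun.uniformSpace (X →L[ℝ] ℝ) ℝ (mackeyFamily Y))

/-- The Mackey topology `μ(X, Y)`. -/
noncomputable def mackeyTop {X : Type*} [NormedAddCommGroup X] [NormedSpace ℝ X]
    (Y : Submodule ℝ (X →L[ℝ] ℝ)) : TopologicalSpace X :=
  (mackeyUniformity Y).toTopologicalSpace

/-- A set `W ⊆ X*` has the Orlicz–Thomas property. -/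
def HasOrliczThomas {X : Type*} [NormedAddCommGroup X] [NormedSpace ℝ X]
    (W : Set (X →L[ℝ] ℝ)) : Prop :=
  ∀ (Ω : Type) (_ : MeasurableSpace Ω) (ν : Set Ω → X),
    (∀ f ∈ W, CountablyAdditive (fun A => f (ν A))) → CountablyAdditive ν

/-- A real set function on a σ-algebra is finitely additive. -/
def FinitelyAdditive {Ω : Type*} [MeasurableSpace Ω] (μ : Set Ω → ℝ) : Prop :=
  ∀ A B : Set Ω, MeasurableSet A → MeasurableSet B → Disjoint A B →
    μ (A ∪ B) = μ A + μ B

/-!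
Fix `A ∈ Σ`. By Hahn–Banach and Riesz, a linear functional on `Y` dominated by `s(·, M(A))` is
integration against a measure on the `σ(X, Y)`-closure of `M(A)`, so Grothendieck's double-limit
argument and dominated convergence make it weak*-continuous on every absolutely convex
weak*-compact subset of `Y`. Sion's minimax theorem then approximates it, uniformly on such sets, by
points of the convex hull of `M(A)`, and quasi-completeness of `(X, μ(X, Y))` produces a point of
`X` representing it. This is Krein's theorem for `M(A)`, in dual form.

Let `H(A)` be the set of points of `X` dominated by `s(·, M(A))` on `Y`. Krein's theorem represents
all subsums of a series of points `zₖ ∈ H(Aₖ)` with disjoint `Aₖ`, so the Orlicz–Thomas property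
makes the series norm-summable. It also splits points of `H(A ∪ B)`, for disjoint `A` and `B`, as
sums of points of `H(A)` and `H(B)`, and a gliding hump then shows that `xₙ ∈ H(Bₙ)` and `Bₙ ↓ ∅`
force `xₙ → 0` in norm. Applied to near-maximisers of `f ∈ X*` over the values of `M`, these two
facts upgrade the finite additivity of `s(f, M)` to countable additivity.
-/

open Filter Topology Set MeasureTheory
open scoped Pointwise

section Grothendieck

variable {S K E : Type*} [PseudoMetricSpace E] {h : S → K → E}

lemma exists_finite_range_forall_dist_lt [TopologicalSpace K] [CompactSpace K]
    (hK : ∀ s, Continuous (h s)) {T : Set S} (hT : T.Finite) {ε : ℝ} (hε : 0 < ε) :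
    ∃ p : K → K, (range p).Finite ∧ ∀ s ∈ T, ∀ x, dist (h s (p x)) (h s x) < ε := by
  let U : K → Set K := fun x' => ⋂ s ∈ T, {x | dist (h s x') (h s x) < ε}
  have hU (x' : K) : U x' ∈ 𝓝 x' := by
    refine (biInter_mem hT).2 fun s _ => IsOpen.mem_nhds ?_ (by simpa using hε)
    exact isOpen_lt (continuous_const.dist (hK s)) continuous_const
  obtain ⟨F, hF⟩ := CompactSpace.elim_nhds_subcover U hU
  have hcover (x : K) : ∃ x' ∈ F, x ∈ U x' := by
    simpa using (hF.ge (mem_univ x) : x ∈ ⋃ x' ∈ F, U x')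
  choose p hpF hp using hcover
  exact ⟨p, F.finite_toSet.subset (range_subset_iff.2 hpF), fun s hs x => mem_iInter₂.1 (hp x) s hs⟩

lemma exists_mem_forall_dist_lt_of_mem_closure [TopologicalSpace S]
    (hS : ∀ x, Continuous fun s => h s x) {A : Set S} {t : S} (ht : t ∈ closure A) {F : Set K}
    (hF : F.Finite) {ε : ℝ} (hε : 0 < ε) :
    ∃ u ∈ A, ∀ x ∈ F, dist (h u x) (h t x) < ε := by
  have hU : ⋂ x ∈ F, {u | dist (h u x) (h t x) < ε} ∈ 𝓝 t := by
    refine (biInter_mem hF).2 fun x _ => IsOpen.mem_nhds ?_ (by simpa using hε)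
    exact isOpen_lt ((hS x).dist continuous_const) continuous_const
  obtain ⟨u, hu, huA⟩ := mem_closure_iff_nhds.1 ht _ hU
  exact ⟨u, huA, fun x hx => mem_iInter₂.1 hu x hx⟩

variable [TopologicalSpace S] [TopologicalSpace K]

lemma exists_seq_retraction_of_mem_closure [CompactSpace K] (hS : ∀ x, Continuous fun s => h s x)
    (hK : ∀ s, Continuous (h s)) {A : Set S} {t : S} (ht : t ∈ closure A) :
    ∃ (u : ℕ → S) (p : ℕ → K → K), (∀ n, u n ∈ A) ∧
      (∀ x, Tendsto (fun n => h t (p n x)) atTop (𝓝 (h t x))) ∧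
      (∀ m x, Tendsto (fun n => h (u m) (p n x)) atTop (𝓝 (h (u m) x))) ∧
      ∀ m x, Tendsto (fun n => h (u n) (p m x)) atTop (𝓝 (h t (p m x))) := by
  -- In a triple `(u, p, n)` the accuracy is `ε n`; each new triple is chosen against the finitely
  -- many points `u` and the finitely many values of the maps `p` already constructed.
  let ε : ℕ → ℝ := fun n => 1 / (n + 1)
  let P : S × (K → K) × ℕ → Prop := fun a => a.1 ∈ A ∧ (range a.2.1).Finite ∧
    ∀ x, dist (h t (a.2.1 x)) (h t x) < ε a.2.2
  let r : S × (K → K) × ℕ → S × (K → K) × ℕ → Prop := fun a b => a.2.2 < b.2.2 ∧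
    (∀ x, dist (h a.1 (b.2.1 x)) (h a.1 x) < ε b.2.2) ∧
    ∀ x, dist (h b.1 (a.2.1 x)) (h t (a.2.1 x)) < ε b.2.2
  have hnext (s : Finset (S × (K → K) × ℕ)) (hs : ∀ a ∈ s, P a) : ∃ b, P b ∧ ∀ a ∈ s, r a b := by
    obtain ⟨n, hn⟩ : ∃ n, ∀ a ∈ s, a.2.2 < n :=
      ⟨s.sup (·.2.2) + 1, fun a ha => Nat.lt_succ_of_le (Finset.le_sup (f := (·.2.2)) ha)⟩
    have hε : 0 < ε n := Nat.one_div_pos_of_nat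
    obtain ⟨p, hpfin, hp⟩ := exists_finite_range_forall_dist_lt hK
      ((s.finite_toSet.image Prod.fst).insert t) hε
    obtain ⟨u, huA, hu⟩ := exists_mem_forall_dist_lt_of_mem_closure hS ht
      (s.finite_toSet.biUnion fun a ha => (hs a ha).2.1) hε
    refine ⟨(u, p, n), ⟨huA, hpfin, hp t (mem_insert t _)⟩, fun a ha => ⟨hn a ha, ?_, ?_⟩⟩
    · exact hp a.1 (mem_insert_of_mem _ (mem_image_of_mem _ ha))
    · exact fun x => hu _ (mem_biUnion ha (mem_range_self x))
  obtain ⟨f, hfP, hfr⟩ := exists_seq_of_forall_finset_exists P r hnext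
  have hmono : StrictMono fun n => (f n).2.2 := fun m n hmn => (hfr m n hmn).1
  have hε : Tendsto (fun n => ε (f n).2.2) atTop (𝓝 0) :=
    tendsto_one_div_add_atTop_nhds_zero_nat.comp hmono.tendsto_atTop
  refine ⟨fun n => (f n).1, fun n => (f n).2.1, fun n => (hfP n).1, fun x => ?_, fun m x => ?_,
    fun m x => ?_⟩
  · exact tendsto_iff_dist_tendsto_zero.2
      (squeeze_zero (fun _ => dist_nonneg) (fun n => ((hfP n).2.2 x).le) hε)
  · exact tendsto_iff_dist_tendsto_zero.2 (squeeze_zero' (.of_forall fun _ => dist_nonneg)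
      ((eventually_gt_atTop m).mono fun n hn => ((hfr m n hn).2.1 x).le) hε)
  · exact tendsto_iff_dist_tendsto_zero.2 (squeeze_zero' (.of_forall fun _ => dist_nonneg)
      ((eventually_gt_atTop m).mono fun n hn => ((hfr m n hn).2.2 x).le) hε)

lemma exists_seq_tendsto_of_mem_closure {E : Type*} [MetricSpace E] {h : S → K → E}
    [CompactSpace S] [CompactSpace K] (hS : ∀ x, Continuous fun s => h s x)
    (hK : ∀ s, Continuous (h s)) {A : Set S} {t : S} (ht : t ∈ closure A) :
    ∃ u : ℕ → S, (∀ n, u n ∈ A) ∧ ∀ x, Tendsto (fun n => h (u n) x) atTop (𝓝 (h t x)) := by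
  obtain ⟨u, p, huA, htp, hup, hpu⟩ := exists_seq_retraction_of_mem_closure hS hK ht
  refine ⟨u, huA, fun x => (tendsto_iff_ultrafilter _ _ _).2 fun V hV => ?_⟩
  have hu : Tendsto u V (𝓝 (V.map u).lim) := Ultrafilter.le_nhds_lim (V.map u)
  have hp : Tendsto (fun n => p n x) V (𝓝 (V.map fun n => p n x).lim) :=
    Ultrafilter.le_nhds_lim (V.map fun n => p n x)
  set s := (V.map u).lim
  set x' := (V.map fun n => p n x).lim
  have hs_p (m : ℕ) : h s (p m x) = h t (p m x) :=
    tendsto_nhds_unique (((hS (p m x)).tendsto s).comp hu) ((hpu m x).mono_left hV)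
  have htx' : h t x' = h t x :=
    tendsto_nhds_unique (((hK t).tendsto x').comp hp) ((htp x).mono_left hV)
  have hux' (m : ℕ) : h (u m) x' = h (u m) x :=
    tendsto_nhds_unique (((hK (u m)).tendsto x').comp hp) ((hup m x).mono_left hV)
  have hst : h s x' = h t x' := by
    refine tendsto_nhds_unique (((hK s).tendsto x').comp hp) ?_
    simpa only [Function.comp_def, hs_p] using ((hK t).tendsto x').comp hp
  have hsx' : h s x' = h s x := by
    refine tendsto_nhds_unique (((hS x').tendsto s).comp hu) ?_
    simpa only [Function.comp_def, hux'] using ((hS x).tendsto s).comp hu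
  -- The double-limit step: `h t x = h t x' = h s x' = h s x`.
  rw [← htx', ← hst, hsx']
  exact ((hS x).tendsto s).comp hu

theorem continuous_integral_of_separately_continuous {h : S → K → ℝ} [CompactSpace S]
    [CompactSpace K] [MeasurableSpace K] [OpensMeasurableSpace K] (μ : Measure K)
    [IsFiniteMeasure μ] (hS : ∀ x, Continuous fun s => h s x)
    (hK : ∀ s, Continuous (h s)) {B : ℝ} (hB : ∀ s x, |h s x| ≤ B) :
    Continuous fun s => ∫ x, h s x ∂μ := by
  refine continuous_iff_isClosed.2 fun Z hZ => isClosed_of_closure_subset fun t ht => ?_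
  obtain ⟨u, huZ, hu⟩ := exists_seq_tendsto_of_mem_closure hS hK ht
  refine hZ.mem_of_tendsto (tendsto_integral_of_dominated_convergence (fun _ => B)
    (fun n => (hK (u n)).aestronglyMeasurable) (integrable_const B)
    (fun n => .of_forall (hB (u n))) (.of_forall hu)) (.of_forall huZ)

end Grothendieck

section HahnBanach

variable {V E : Type*} [AddCommGroup V] [Module ℝ V] [AddCommGroup E] [Module ℝ E]

lemma apply_zero_of_pos_homogeneous {N : E → ℝ}
    (hsmul : ∀ c : ℝ, 0 < c → ∀ x, N (c • x) = c * N x) : N 0 = 0 := by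
  linarith [(hsmul 2 two_pos 0).symm.trans (by rw [smul_zero])]

lemma exists_linearMap_comp_eq_of_le_sublinear (T : V →ₗ[ℝ] E) (φ : V →ₗ[ℝ] ℝ) (N : E → ℝ)
    (hsmul : ∀ c : ℝ, 0 < c → ∀ x, N (c • x) = c * N x) (hadd : ∀ x y, N (x + y) ≤ N x + N y)
    (hφ : ∀ v, φ v ≤ N (T v)) : ∃ g : E →ₗ[ℝ] ℝ, g ∘ₗ T = φ ∧ ∀ x, g x ≤ N x := by
  have hker : T.ker ≤ φ.ker := by
    have hle (v : V) (hv : T v = 0) : φ v ≤ 0 := by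
      simpa only [hv, apply_zero_of_pos_homogeneous hsmul] using hφ v
    intro v hv
    rw [LinearMap.mem_ker] at hv ⊢
    exact (hle v hv).antisymm (by simpa using hle (-v) (by simp [hv]))
  let f : E →ₗ.[ℝ] ℝ := ⟨T.range, T.ker.liftQ φ hker ∘ₗ T.quotKerEquivRange.symm.toLinearMap⟩
  have hf (v : V) : f ⟨T v, v, rfl⟩ = φ v :=
    congrArg (T.ker.liftQ φ hker) (T.quotKerEquivRange_symm_apply_image v ⟨v, rfl⟩)
  obtain ⟨g, hgf, hgN⟩ := exists_extension_of_le_sublinear f N hsmul hadd <| by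
    rintro ⟨_, v, rfl⟩
    exact (hf v).trans_le (hφ v)
  exact ⟨g, LinearMap.ext fun v => (hgf ⟨T v, v, rfl⟩).trans (hf v), hgN⟩

theorem exists_add_eq_of_le_sublinear_add (φ : V →ₗ[ℝ] ℝ) {p q : V → ℝ}
    (hp : ∀ c : ℝ, 0 < c → ∀ v, p (c • v) = c * p v) (hp' : ∀ u v, p (u + v) ≤ p u + p v)
    (hq : ∀ c : ℝ, 0 < c → ∀ v, q (c • v) = c * q v) (hq' : ∀ u v, q (u + v) ≤ q u + q v)
    (hφ : ∀ v, φ v ≤ p v + q v) :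
    ∃ φ₁ φ₂ : V →ₗ[ℝ] ℝ, (∀ v, φ₁ v ≤ p v) ∧ (∀ v, φ₂ v ≤ q v) ∧ φ₁ + φ₂ = φ := by
  -- Extend `φ`, viewed on the diagonal of `V × V`, below `(u, v) ↦ p u + q v`.
  obtain ⟨g, hgφ, hg⟩ := exists_linearMap_comp_eq_of_le_sublinear
    (LinearMap.id.prod LinearMap.id) φ (fun w : V × V => p w.1 + q w.2)
    (fun c hc w => by simp only [Prod.smul_fst, Prod.smul_snd, hp c hc, hq c hc, mul_add])
    (fun u v => (add_le_add (hp' u.1 v.1) (hq' u.2 v.2)).trans_eq (add_add_add_comm _ _ _ _)) hφ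
  refine ⟨g ∘ₗ LinearMap.inl ℝ V V, g ∘ₗ LinearMap.inr ℝ V V, fun v => ?_, fun v => ?_, ?_⟩
  · simpa [apply_zero_of_pos_homogeneous hq] using hg (v, 0)
  · simpa [apply_zero_of_pos_homogeneous hp] using hg (0, v)
  · ext v
    simp [← hgφ, ← map_add]

end HahnBanach

section Riesz

variable {K : Type*} [TopologicalSpace K] [CompactSpace K]

lemma le_iSup_continuousMap (u : C(K, ℝ)) (x : K) : u x ≤ ⨆ z, u z :=
  le_ciSup (isCompact_range u.continuous).bddAbove x

lemma exists_measure_integral_eq_of_nonneg [T2Space K] [MeasurableSpace K] [BorelSpace K]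
    (g : C(K, ℝ) →ₗ[ℝ] ℝ) (hg : ∀ u, 0 ≤ u → 0 ≤ g u) :
    ∃ μ : Measure K, IsFiniteMeasure μ ∧ ∀ u, ∫ x, u x ∂μ = g u := by
  let L : CompactlySupportedContinuousMap K ℝ →ₗ[ℝ] ℝ :=
    { toFun u := g u.toContinuousMap
      map_add' u v := map_add g u.toContinuousMap v.toContinuousMap
      map_smul' c u := map_smul g c u.toContinuousMap }
  let Λ : CompactlySupportedContinuousMap K ℝ →ₚ[ℝ] ℝ := .mk₀ L fun u hu => hg _ hu
  exact ⟨RealRMK.rieszMeasure Λ, inferInstance, fun u => RealRMK.integral_rieszMeasure Λ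
    ⟨u, HasCompactSupport.of_compactSpace u⟩⟩

theorem exists_measure_integral_eq_of_le_iSup [T2Space K] [MeasurableSpace K] [BorelSpace K]
    [Nonempty K] {V : Type*} [AddCommGroup V] [Module ℝ V] (T : V →ₗ[ℝ] C(K, ℝ)) (φ : V →ₗ[ℝ] ℝ)
    (hφ : ∀ v, φ v ≤ ⨆ x, T v x) :
    ∃ μ : Measure K, IsFiniteMeasure μ ∧ ∀ v, ∫ x, T v x ∂μ = φ v := by
  obtain ⟨g, hgT, hg⟩ := exists_linearMap_comp_eq_of_le_sublinear T φ (fun u : C(K, ℝ) => ⨆ x, u x)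
    (fun c hc u => (Real.mul_iSup_of_nonneg hc.le u).symm)
    (fun u v => ciSup_le fun x =>
      add_le_add (le_iSup_continuousMap u x) (le_iSup_continuousMap v x)) hφ
  have hpos (u : C(K, ℝ)) (hu : 0 ≤ u) : 0 ≤ g u := by
    have hneg : g (-u) ≤ 0 := (hg (-u)).trans (ciSup_le fun x => neg_nonpos.2 (hu x))
    rwa [map_neg, neg_nonpos] at hneg
  obtain ⟨μ, hμ, hint⟩ := exists_measure_integral_eq_of_nonneg g hpos
  exact ⟨μ, hμ, fun v => (hint (T v)).trans (LinearMap.congr_fun hgT v)⟩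

end Riesz

section Continuity

variable {S K V : Type*} [TopologicalSpace S] [CompactSpace S] [TopologicalSpace K] [CompactSpace K]
  [AddCommGroup V] [Module ℝ V]

theorem continuous_comp_of_le_iSup [T2Space K] [Nonempty K]
    (T : V →ₗ[ℝ] C(K, ℝ)) (φ : V →ₗ[ℝ] ℝ) (hφ : ∀ v, φ v ≤ ⨆ x, T v x) {j : S → V}
    (hj : ∀ x, Continuous fun s => T (j s) x) {B : ℝ}
    (hB : ∀ s x, |T (j s) x| ≤ B) : Continuous fun s => φ (j s) := by
  borelize K
  obtain ⟨μ, _, hμ⟩ := exists_measure_integral_eq_of_le_iSup T φ hφ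
  simpa only [hμ] using
    continuous_integral_of_separately_continuous μ hj (fun s => (T (j s)).continuous) hB

end Continuity

section Multimeasure

variable {X : Type*} [NormedAddCommGroup X] [NormedSpace ℝ X]

section SupportFn

variable {C : Set X} {f g : X →L[ℝ] ℝ}

lemma bddAbove_image_of_isBounded (hC : Bornology.IsBounded C) (f : X →L[ℝ] ℝ) :
    BddAbove (f '' C) :=
  (f.lipschitz.isBounded_image hC).bddAbove

lemma le_supportFn_s13 (hC : Bornology.IsBounded C) (f : X →L[ℝ] ℝ) {x : X} (hx : x ∈ C) :
    f x ≤ supportFn f C :=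
  le_csSup (bddAbove_image_of_isBounded hC f) (mem_image_of_mem f hx)

lemma supportFn_le_s13 (hne : C.Nonempty) {a : ℝ} (h : ∀ x ∈ C, f x ≤ a) : supportFn f C ≤ a :=
  csSup_le (hne.image f) (forall_mem_image.2 h)

lemma exists_lt_of_lt_supportFn (hne : C.Nonempty) {a : ℝ} (h : a < supportFn f C) :
    ∃ x ∈ C, a < f x := by
  simpa using exists_lt_of_lt_csSup (hne.image f) h

lemma supportFn_add_le (hne : C.Nonempty) (hC : Bornology.IsBounded C) :
    supportFn (f + g) C ≤ supportFn f C + supportFn g C :=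
  supportFn_le_s13 hne fun _ hx => add_le_add (le_supportFn_s13 hC f hx) (le_supportFn_s13 hC g hx)

lemma supportFn_smul_s13 {c : ℝ} (hc : 0 ≤ c) : supportFn (c • f) C = c * supportFn f C := by
  have himage : ⇑(c • f) '' C = c • (f '' C) := by rw [← image_smul, image_image]; rfl
  rw [supportFn, himage, Real.sSup_smul_of_nonneg hc, smul_eq_mul, supportFn]

end SupportFn

theorem exists_mem_convexHull_forall_lt_add {S : Set (WeakDual ℝ X)} (hne : S.Nonempty)
    (hconv : Convex ℝ S) (hcpt : IsCompact S) {C : Set X} {ψ : WeakDual ℝ X →ₗ[ℝ] ℝ}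
    (hψ : ContinuousOn ψ S) {ε : ℝ} (hlt : ∀ y ∈ S, ∃ x ∈ C, ψ y < y x + ε) :
    ∃ x ∈ convexHull ℝ C, ∀ y ∈ S, ψ y < y x + ε := by
  let f : WeakDual ℝ X → X → ℝ := fun y x => y x - ψ y
  have hlsc (x : X) : LowerSemicontinuousOn (fun y => f y x) S :=
    ((WeakDual.eval_continuous x).continuousOn.sub hψ).lowerSemicontinuousOn
  have hconvex (x : X) : ConvexOn ℝ S fun y => f y x :=
    (((topDualPairing ℝ X).flip x).convexOn hconv).sub (ψ.concaveOn hconv)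
  have hconcave (y : WeakDual ℝ X) : ConcaveOn ℝ (convexHull ℝ C) (f y) :=
    (y.toLinearMap.concaveOn (convex_convexHull ℝ C)).sub
      (convexOn_const (ψ y) (convex_convexHull ℝ C))
  have husc (y : WeakDual ℝ X) : UpperSemicontinuousOn (f y) (convexHull ℝ C) :=
    (y.continuous.sub continuous_const).upperSemicontinuous.upperSemicontinuousOn _
  obtain ⟨F, hF⟩ : ∃ F : Finset C, ∀ y ∈ S, ∃ x ∈ F, -ε < f y x := by
    refine (LowerSemicontinuousOn.inter_biInter_preimage_Iic_eq_empty_iff_exists_finset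
      (f := fun x y => f y x) hcpt fun x _ => hlsc x).1 ?_
    refine eq_empty_of_forall_notMem fun y ⟨hy, hyC⟩ => ?_
    obtain ⟨x, hx, hlt⟩ := hlt y hy
    have hle : y x - ψ y ≤ -ε := mem_iInter₂.1 hyC x hx
    linarith
  obtain ⟨x, hx, hlt⟩ := Sion.exists_lt_iInf_of_lt_iInf_of_finite hne hcpt (fun x _ => hlsc x)
    (fun x _ => (hconvex x).quasiconvexOn) (convex_convexHull ℝ C) (fun y _ => husc y)
    (fun y _ => (hconcave y).quasiconcaveOn) hconv (F.finite_toSet.image Subtype.val)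
    (image_subset_iff.2 fun x _ => subset_convexHull ℝ C x.2)
    fun y hy => by simpa using hF y hy
  exact ⟨x, hx, fun y hy => by linarith [hlt y hy]⟩

/-- The closed ball of radius `R` for the norm `x ↦ sup {|y x| : y ∈ Y, ‖y‖ ≤ 1}` that `Y`
induces on `X`. -/
def dualBall (Y : Submodule ℝ (X →L[ℝ] ℝ)) (R : ℝ) : Set X :=
  {x | ∀ y ∈ Y, |y x| ≤ R * ‖y‖}

section WeakTopologies

variable {Y : Submodule ℝ (X →L[ℝ] ℝ)}

lemma eq_of_forall_mem_eq (hY : ∀ x : X, (∀ f ∈ Y, f x = 0) → x = 0) {x x' : X}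
    (h : ∀ f ∈ Y, f x = f x') : x = x' :=
  sub_eq_zero.1 (hY _ fun f hf => by rw [map_sub, h f hf, sub_self])

lemma continuous_sigmaTop {y : X →L[ℝ] ℝ} (hy : y ∈ Y) :
    Continuous[sigmaTop (Y : Set (X →L[ℝ] ℝ)), _] y :=
  @continuous_pi_iff _ _ _ (sigmaTop _) _ _ |>.1 continuous_induced_dom
    (⟨y, hy⟩ : (Y : Set (X →L[ℝ] ℝ)))

lemma t2Space_sigmaTop (hY : ∀ x : X, (∀ f ∈ Y, f x = 0) → x = 0) :
    @T2Space X (sigmaTop (Y : Set (X →L[ℝ] ℝ))) :=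
  @T2Space.of_injective_continuous _ _ (sigmaTop _) _ _ _
    (fun _ _ h => eq_of_forall_mem_eq hY fun y hy => congrFun h ⟨y, hy⟩) continuous_induced_dom

lemma isClosed_sigmaTop_dualBall (R : ℝ) :
    IsClosed[sigmaTop (Y : Set (X →L[ℝ] ℝ))] (dualBall Y R) := by
  have hclosed : IsClosed {F : Y → ℝ | ∀ y, |F y| ≤ R * ‖y‖} := by
    rw [ofPred_forall]
    exact isClosed_iInter fun y => isClosed_le (continuous_apply y).abs continuous_const
  convert @IsClosed.preimage _ _ (sigmaTop _) _ _ continuous_induced_dom _ hclosed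
  ext x
  simp [dualBall]

lemma subset_dualBall {C : Set X} {R : ℝ} (hR : ∀ x ∈ C, ‖x‖ ≤ R) : C ⊆ dualBall Y R := by
  intro x hx y _
  rw [mul_comm]
  exact y.le_opNorm_of_le (hR x hx)

lemma continuous_weakStarTop_eval (x : X) :
    Continuous[weakStarTop X, _] fun f : X →L[ℝ] ℝ => f x :=
  @continuous_pi_iff _ _ _ (weakStarTop X) _ _ |>.1 continuous_induced_dom x

lemma exists_norm_le_of_isCompact_weakStarTop [CompleteSpace X] {S : Set (X →L[ℝ] ℝ)}
    (hS : @IsCompact (X →L[ℝ] ℝ) (weakStarTop X) S) : ∃ B, ∀ y ∈ S, ‖y‖ ≤ B := by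
  have hbdd (x : X) : ∃ R, ∀ y : S, ‖(y : X →L[ℝ] ℝ) x‖ ≤ R := by
    have himage := @IsCompact.image _ _ (weakStarTop X) _ _ _ hS (continuous_weakStarTop_eval x)
    obtain ⟨R, hR⟩ := himage.isBounded.exists_norm_le
    exact ⟨R, fun y => hR _ (mem_image_of_mem _ y.2)⟩
  obtain ⟨B, hB⟩ := banach_steinhaus hbdd
  exact ⟨B, fun y hy => hB ⟨y, hy⟩⟩

theorem continuousOn_of_le_supportFn [CompleteSpace X] (hY : ∀ x : X, (∀ f ∈ Y, f x = 0) → x = 0)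
    {C : Set X} (hne : C.Nonempty) (hbd : Bornology.IsBounded C)
    (hcpt : @IsCompact X (sigmaTop (Y : Set (X →L[ℝ] ℝ)))
      (@closure X (sigmaTop (Y : Set (X →L[ℝ] ℝ))) C))
    {ψ : (X →L[ℝ] ℝ) →ₗ[ℝ] ℝ} (hψ : ∀ y ∈ Y, ψ y ≤ supportFn y C)
    {S : Set (X →L[ℝ] ℝ)} (hSY : S ⊆ Y) (hS : @IsCompact _ (weakStarTop X) S) :
    @ContinuousOn _ _ (weakStarTop X) _ ψ S := by
  let τ := sigmaTop (Y : Set (X →L[ℝ] ℝ))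
  let K : Set X := closure[τ] C
  let topK : TopologicalSpace K := @instTopologicalSpaceSubtype X _ τ
  have : CompactSpace K := @isCompact_iff_compactSpace X τ K |>.1 hcpt
  have : T2Space K := @instT2SpaceSubtype X τ _ (t2Space_sigmaTop hY)
  have hCK : C ⊆ K := @subset_closure X τ C
  have : Nonempty K := (hne.mono hCK).to_subtype
  let T : Y →ₗ[ℝ] C(K, ℝ) :=
    { toFun y := ⟨fun x => y.1 x, (continuous_sigmaTop y.2).comp continuous_subtype_val⟩
      map_add' _ _ := rfl
      map_smul' _ _ := rfl }
  have hT (y : Y) : ψ y ≤ ⨆ x, T y x :=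
    (hψ y y.2).trans (supportFn_le_s13 hne fun x hx => le_iSup_continuousMap (T y) ⟨x, hCK hx⟩)
  obtain ⟨R, hR, hCR⟩ := hbd.exists_pos_norm_le
  obtain ⟨B, hB⟩ := exists_norm_le_of_isCompact_weakStarTop hS
  have hKR : K ⊆ dualBall Y R :=
    @closure_minimal X τ C _ (subset_dualBall hCR) (isClosed_sigmaTop_dualBall R)
  let topS : TopologicalSpace S := @instTopologicalSpaceSubtype _ _ (weakStarTop X)
  have : CompactSpace S := @isCompact_iff_compactSpace _ (weakStarTop X) S |>.1 hS
  refine @continuousOn_iff_continuous_domRestrict _ _ (weakStarTop X) _ _ _ |>.2 ?_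
  let j : S → Y := inclusion hSY
  refine continuous_comp_of_le_iSup T (ψ ∘ₗ Y.subtype) hT (j := j) (B := R * B) (fun x => ?_)
    fun y x => ?_
  · exact @Continuous.comp _ _ _ topS (weakStarTop X) _ _ _ (continuous_weakStarTop_eval x.1)
      (@continuous_subtype_val _ (weakStarTop X) _)
  · exact (hKR x.2 y (hSY y.2)).trans (by gcongr; exact hB y y.2)

theorem exists_mem_convexHull_forall_abs_sub_lt [CompleteSpace X]
    (hY : ∀ x : X, (∀ f ∈ Y, f x = 0) → x = 0)
    {C : Set X} (hne : C.Nonempty) (hbd : Bornology.IsBounded C)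
    (hcpt : @IsCompact X (sigmaTop (Y : Set (X →L[ℝ] ℝ)))
      (@closure X (sigmaTop (Y : Set (X →L[ℝ] ℝ))) C))
    {ψ : (X →L[ℝ] ℝ) →ₗ[ℝ] ℝ} (hψ : ∀ y ∈ Y, ψ y ≤ supportFn y C)
    {S : Set (X →L[ℝ] ℝ)} (hS : S ∈ mackeyFamily Y) {ε : ℝ} (hε : 0 < ε) :
    ∃ x ∈ convexHull ℝ C, ∀ y ∈ S, |y x - ψ y| < ε := by
  obtain ⟨hSY, hSconv, hSbal, hScpt⟩ := hS
  rcases S.eq_empty_or_nonempty with rfl | hSne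
  · exact hne.convexHull.imp fun x hx => ⟨hx, by simp⟩
  have hlt (y) (hy : y ∈ S) : ∃ x ∈ C, ψ y < y x + ε := by
    obtain ⟨x, hx, hlt⟩ := exists_lt_of_lt_supportFn hne (sub_lt_self (supportFn y C) hε)
    exact ⟨x, hx, by linarith [hψ y (hSY hy)]⟩
  obtain ⟨x, hx, hxS⟩ : ∃ x ∈ convexHull ℝ C, ∀ y ∈ S, ψ y < y x + ε :=
    exists_mem_convexHull_forall_lt_add (ψ := ψ) hSne hSconv hScpt
      (continuousOn_of_le_supportFn hY hne hbd hcpt hψ hSY hScpt) hlt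
  refine ⟨x, hx, fun y hy => abs_sub_lt_iff.2 ⟨?_, by linarith [hxS y hy]⟩⟩
  have hneg : -ψ y < -y x + ε := by
    simpa only [map_neg, neg_apply] using hxS (-y) (hSbal.neg_mem_iff.2 hy)
  linarith

end WeakTopologies

section Mackey

variable {Y : Submodule ℝ (X →L[ℝ] ℝ)}

lemma image_smul_Icc_mem_mackeyFamily {y : X →L[ℝ] ℝ} (hy : y ∈ Y) :
    (fun t : ℝ => t • y) '' Icc (-1) 1 ∈ mackeyFamily Y := by
  refine ⟨image_subset_iff.2 fun t _ => Y.smul_mem t hy,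
    (convex_Icc (-1 : ℝ) 1).linear_image (LinearMap.toSpanSingleton ℝ _ y), ?_, ?_⟩
  · rintro a ha _ ⟨_, ⟨t, ht, rfl⟩, rfl⟩
    refine ⟨a * t, abs_le.1 ?_, mul_smul a t y⟩
    rw [abs_mul]
    exact mul_le_one₀ ha (abs_nonneg t) (abs_le.2 ht)
  · exact isCompact_Icc.image (Y := WeakDual ℝ X) (f := fun t : ℝ => t • (y : WeakDual ℝ X))
      (continuous_id.smul continuous_const)

lemma add_mem_mackeyFamily {S T : Set (X →L[ℝ] ℝ)} (hS : S ∈ mackeyFamily Y)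
    (hT : T ∈ mackeyFamily Y) : S + T ∈ mackeyFamily Y :=
  ⟨add_subset_iff.2 fun _ hs _ ht => Y.add_mem (hS.1 hs) (hT.1 ht), hS.2.1.add hT.2.1,
    hS.2.2.1.add hT.2.2.1, IsCompact.add (N := WeakDual ℝ X) hS.2.2.2 hT.2.2.2⟩

lemma directedOn_mackeyFamily (Y : Submodule ℝ (X →L[ℝ] ℝ)) :
    DirectedOn (· ⊆ ·) (mackeyFamily Y) := by
  intro S hS T hT
  rcases S.eq_empty_or_nonempty with rfl | hSne
  · exact ⟨T, hT, empty_subset T, Subset.rfl⟩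
  rcases T.eq_empty_or_nonempty with rfl | hTne
  · exact ⟨S, hS, Subset.rfl, empty_subset S⟩
  have hS0 : 0 ∈ S := Balanced.zero_mem (𝕜 := ℝ) hS.2.2.1 hSne
  have hT0 : 0 ∈ T := Balanced.zero_mem (𝕜 := ℝ) hT.2.2.1 hTne
  refine ⟨S + T, add_mem_mackeyFamily hS hT, fun s hs => ?_, fun t ht => ?_⟩
  · exact mem_add.2 ⟨s, hs, 0, hT0, add_zero s⟩
  · exact mem_add.2 ⟨0, hS0, t, ht, zero_add t⟩

/-- The map that induces the Mackey uniformity: `x` as a function on `X*`, in the space of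
functions with uniform convergence on `mackeyFamily Y`. -/
def mackeyEval (Y : Submodule ℝ (X →L[ℝ] ℝ)) (x : X) :
    UniformOnFun (X →L[ℝ] ℝ) ℝ (mackeyFamily Y) :=
  UniformOnFun.ofFun (mackeyFamily Y) fun f => f x

lemma hasBasis_comap_mackeyEval (Y : Submodule ℝ (X →L[ℝ] ℝ)) (F : (X →L[ℝ] ℝ) → ℝ) :
    (comap (mackeyEval Y) (𝓝 (UniformOnFun.ofFun (mackeyFamily Y) F))).HasBasis
      (fun p : Set (X →L[ℝ] ℝ) × ℝ => p.1 ∈ mackeyFamily Y ∧ 0 < p.2)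
      fun p => {x | ∀ y ∈ p.1, |y x - F y| < p.2} := by
  have hbasis := (UniformOnFun.hasBasis_nhds_of_basis _ ℝ (mackeyFamily Y)
    (UniformOnFun.ofFun (mackeyFamily Y) F) ⟨_, image_smul_Icc_mem_mackeyFamily Y.zero_mem⟩
    (directedOn_mackeyFamily Y) Metric.uniformity_basis_dist).comap (mackeyEval Y)
  refine hbasis.congr (fun _ => Iff.rfl) fun p _ => ?_
  ext x
  exact forall₂_congr fun y _ => by rw [← Real.dist_eq]; rfl

lemma continuous_eval_uniformOnFun {y : X →L[ℝ] ℝ} (hy : y ∈ Y) :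
    Continuous fun F : UniformOnFun (X →L[ℝ] ℝ) ℝ (mackeyFamily Y) =>
      UniformOnFun.toFun (mackeyFamily Y) F y :=
  (UniformOnFun.uniformContinuous_eval_of_mem ℝ (mackeyFamily Y)
    (⟨1, by norm_num, one_smul ℝ y⟩ : y ∈ (fun t : ℝ => t • y) '' Icc (-1) 1)
    (image_smul_Icc_mem_mackeyFamily hy)).continuous

lemma mackeyTop_le_sigmaTop (Y : Submodule ℝ (X →L[ℝ] ℝ)) :
    mackeyTop Y ≤ sigmaTop (Y : Set (X →L[ℝ] ℝ)) :=
  continuous_iff_le_induced.1 <| @continuous_pi _ _ _ (mackeyTop Y) _ _ fun y =>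
    @Continuous.comp X _ ℝ (mackeyTop Y) _ _ (mackeyEval Y) _ (continuous_eval_uniformOnFun y.2)
      continuous_induced_dom

lemma isVonNBounded_mackeyTop_dualBall [CompleteSpace X] {R : ℝ} (hR : 0 ≤ R) :
    @Bornology.IsVonNBounded ℝ X _ _ _ (mackeyTop Y) (dualBall Y R) := by
  intro V hV
  have hV : V ∈ comap (mackeyEval Y) (𝓝 (mackeyEval Y 0)) := by
    rwa [← @nhds_induced _ _ UniformSpace.toTopologicalSpace (mackeyEval Y) 0]
  obtain ⟨⟨S, ε⟩, ⟨hS, hε⟩, hSV⟩ := (hasBasis_comap_mackeyEval Y fun y => y 0).mem_iff.1 hV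
  obtain ⟨B, hB⟩ := exists_norm_le_of_isCompact_weakStarTop hS.2.2.2
  refine absorbs_iff_norm.2 ⟨R * |B| / ε + 1, fun c hc x hx => ?_⟩
  have hc0 : 0 < ‖c‖ := lt_of_lt_of_le (by positivity) hc
  refine (mem_smul_set_iff_inv_smul_mem₀ (norm_pos_iff.1 hc0) _ _).2 (hSV fun y hy => ?_)
  rw [map_zero, sub_zero, map_smul, smul_eq_mul, abs_mul, abs_inv, ← Real.norm_eq_abs c,
    inv_mul_lt_iff₀ hc0]
  calc |y x| ≤ R * ‖y‖ := hx y (hS.1 hy)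
    _ ≤ R * |B| := by gcongr; exact (hB y hy).trans (le_abs_self B)
    _ = (R * |B| / ε) * ε := by field_simp
    _ < ‖c‖ * ε := by gcongr; linarith

theorem exists_eq_of_le_supportFn [CompleteSpace X] (hY : ∀ x : X, (∀ f ∈ Y, f x = 0) → x = 0)
    (hqc : ∀ S : Set X, @IsClosed X (mackeyTop Y) S →
      @Bornology.IsVonNBounded ℝ X _ _ _ (mackeyTop Y) S →
      @IsComplete X (mackeyUniformity Y) S)
    {C : Set X} (hne : C.Nonempty) (hbd : Bornology.IsBounded C)
    (hcpt : @IsCompact X (sigmaTop (Y : Set (X →L[ℝ] ℝ)))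
      (@closure X (sigmaTop (Y : Set (X →L[ℝ] ℝ))) C))
    {ψ : (X →L[ℝ] ℝ) →ₗ[ℝ] ℝ} (hψ : ∀ y ∈ Y, ψ y ≤ supportFn y C) :
    ∃ x : X, ∀ y ∈ Y, y x = ψ y := by
  obtain ⟨R, hR, hCR⟩ := hbd.exists_pos_norm_le
  -- `l` is the trace on the convex hull of the neighbourhoods of `ψ`, which need not be a point of
  -- `X`; quasi-completeness provides the point to which `l` converges.
  let Ψ := UniformOnFun.ofFun (mackeyFamily Y) ψ
  let l : Filter X := comap (mackeyEval Y) (𝓝 Ψ) ⊓ 𝓟 (convexHull ℝ C)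
  have hl : l.NeBot := by
    refine (hasBasis_comap_mackeyEval Y ψ).inf_principal_neBot_iff.2 fun {p} hp => ?_
    obtain ⟨x, hxC, hx⟩ := exists_mem_convexHull_forall_abs_sub_lt hY hne hbd hcpt hψ hp.1 hp.2
    exact ⟨x, hx, hxC⟩
  have hcauchy : @Cauchy X (mackeyUniformity Y) l :=
    @Cauchy.mono _ (mackeyUniformity Y) _ _ hl (@Cauchy.comap _ _ (mackeyUniformity Y) _ _
      (mackeyEval Y) cauchy_nhds le_rfl (hl.mono inf_le_left)) inf_le_left
  have hhull : convexHull ℝ C ⊆ dualBall Y R :=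
    subset_dualBall fun x hx => mem_closedBall_zero_iff.1 <|
      convexHull_min (fun x hx => mem_closedBall_zero_iff.2 (hCR x hx)) (convex_closedBall 0 R) hx
  obtain ⟨x, -, hx⟩ := hqc _ ((isClosed_sigmaTop_dualBall R).mono (mackeyTop_le_sigmaTop Y))
    (isVonNBounded_mackeyTop_dualBall hR.le) l hcauchy (inf_le_right.trans (principal_mono.2 hhull))
  refine ⟨x, fun y hy => ?_⟩
  have hy_cont : Continuous[mackeyTop Y, _] y :=
    continuous_le_dom (mackeyTop_le_sigmaTop Y) (continuous_sigmaTop hy)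
  have hlx : Tendsto y l (𝓝 (y x)) :=
    (@Continuous.tendsto _ _ (mackeyTop Y) _ _ hy_cont x).mono_left hx
  have hlψ : Tendsto y l (𝓝 (ψ y)) :=
    ((continuous_eval_uniformOnFun hy).tendsto Ψ).comp (tendsto_comap.mono_left inf_le_left)
  exact tendsto_nhds_unique hlx hlψ

end Mackey

section CountableAdditivity

lemma antitone_iUnion_add {Ω : Type*} (A : ℕ → Set Ω) : Antitone fun N => ⋃ i, A (i + N) :=
  antitone_nat_of_succ_le fun N => iUnion_subset fun i => subset_iUnion_of_subset (i + 1)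
    (by rw [add_assoc, add_comm 1])

lemma iInter_iUnion_add_eq_empty {Ω : Type*} {A : ℕ → Set Ω}
    (hdisj : Pairwise (Function.onFun Disjoint A)) :
    ⋂ N, ⋃ i, A (i + N) = ∅ := by
  refine eq_empty_of_forall_notMem fun w hw => ?_
  obtain ⟨i, hi⟩ := mem_iUnion.1 (mem_iInter.1 hw 0)
  obtain ⟨j, hj⟩ := mem_iUnion.1 (mem_iInter.1 hw (i + 1))
  exact disjoint_left.1 (hdisj (by lia : i + 0 ≠ j + (i + 1))) hi hj

variable {Ω : Type*} [MeasurableSpace Ω]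

namespace CountablyAdditive

variable {E : Type*} [AddCommGroup E] [TopologicalSpace E] [IsTopologicalAddGroup E] [T2Space E]
  {ν : Set Ω → E}

lemma empty (hν : CountablyAdditive ν) : ν ∅ = 0 :=
  summable_const_iff (β := ℕ) _ |>.1
    (hν (fun _ => ∅) (fun _ => .empty) fun _ _ _ => disjoint_empty ∅).summable

lemma exists_vectorMeasure (hν : CountablyAdditive ν) :
    ∃ v : VectorMeasure Ω E, ∀ A, MeasurableSet A → v A = ν A := by
  classical
  refine ⟨⟨fun A => if MeasurableSet A then ν A else 0, ?_, fun A hA => if_neg hA,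
    fun A hA hdisj => ?_⟩, fun A hA => if_pos hA⟩
  · simp [hν.empty]
  · simpa [hA, MeasurableSet.iUnion hA] using hν A hA hdisj

lemma hasSum_iUnion (hν : CountablyAdditive ν) {ι : Type*} [Countable ι] {A : ι → Set Ω}
    (hA : ∀ i, MeasurableSet (A i)) (hdisj : Pairwise (Function.onFun Disjoint A)) :
    HasSum (fun i => ν (A i)) (ν (⋃ i, A i)) := by
  obtain ⟨v, hv⟩ := hν.exists_vectorMeasure
  simpa only [hv _ (hA _), hv _ (MeasurableSet.iUnion hA)] using
    VectorMeasure.hasSum_of_disjoint_iUnion (v := v) hA hdisj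

lemma union (hν : CountablyAdditive ν) {A B : Set Ω} (hA : MeasurableSet A)
    (hB : MeasurableSet B) (hAB : Disjoint A B) : ν (A ∪ B) = ν A + ν B := by
  obtain ⟨v, hv⟩ := hν.exists_vectorMeasure
  rw [← hv _ hA, ← hv _ hB, ← hv _ (hA.union hB), VectorMeasure.of_union hAB hA hB]

lemma tendsto_zero (hν : CountablyAdditive ν) {B : ℕ → Set Ω} (hB : ∀ n, MeasurableSet (B n))
    (hanti : Antitone B) (hempty : ⋂ n, B n = ∅) : Tendsto (fun n => ν (B n)) atTop (𝓝 0) := by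
  obtain ⟨v, hv⟩ := hν.exists_vectorMeasure
  simpa only [hempty, v.empty, hv _ (hB _)] using
    VectorMeasure.tendsto_vectorMeasure_iInter_atTop_nat (v := v) hanti hB

end CountablyAdditive

lemma FinitelyAdditive.sum_range_add_iUnion {μ : Set Ω → ℝ} (hμ : FinitelyAdditive μ)
    {A : ℕ → Set Ω} (hA : ∀ n, MeasurableSet (A n))
    (hdisj : Pairwise (Function.onFun Disjoint A)) (N : ℕ) :
    ∑ n ∈ Finset.range N, μ (A n) + μ (⋃ i, A (i + N)) = μ (⋃ n, A n) := by
  induction N with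
  | zero => simp
  | succ N ih =>
    have hsplit : ⋃ i, A (i + N) = A N ∪ ⋃ i, A (i + (N + 1)) := by
      rw [← union_iUnion_nat_succ fun i => A (i + N)]
      simp only [zero_add, add_right_comm, add_assoc]
    rw [← ih, hsplit, hμ _ _ (hA N) (.iUnion fun i => hA _)
      (disjoint_iUnion_right.2 fun i => hdisj (by lia)), Finset.sum_range_succ, add_assoc]

theorem FinitelyAdditive.countablyAdditive {μ : Set Ω → ℝ} (hμ : FinitelyAdditive μ)
    (hsum : ∀ A : ℕ → Set Ω, (∀ n, MeasurableSet (A n)) → Pairwise (Function.onFun Disjoint A) →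
      Summable fun n => μ (A n))
    (htail : ∀ B : ℕ → Set Ω, (∀ n, MeasurableSet (B n)) → Antitone B → ⋂ n, B n = ∅ →
      Tendsto (fun n => μ (B n)) atTop (𝓝 0)) :
    CountablyAdditive μ := by
  intro A hA hdisj
  refine (hsum A hA hdisj).hasSum_iff_tendsto_nat.2 ?_
  have htail := htail _ (fun N => .iUnion fun i => hA (i + N)) (antitone_iUnion_add A)
    (iInter_iUnion_add_eq_empty hdisj)
  simpa only [sub_zero, ← eq_sub_of_add_eq (hμ.sum_range_add_iUnion hA hdisj _)] using
    (tendsto_const_nhds (x := μ (⋃ n, A n))).sub htail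

end CountableAdditivity

section OrliczThomas

variable {Y : Submodule ℝ (X →L[ℝ] ℝ)}

lemma countablyAdditive_tsum_subtype {a : ℕ → ℝ} (ha : Summable a) :
    @CountablyAdditive ℕ ℝ ⊤ _ _ fun S => ∑' k : S, a k := by
  intro A _ hdisj
  have hunion : HasSum (fun k : ⋃ n, A n => a k) (∑' k : ⋃ n, A n, a k) := (ha.subtype _).hasSum
  rw [← (unionEqSigmaOfDisjoint hdisj).symm.hasSum_iff] at hunion
  exact hunion.sigma fun n => (ha.subtype (A n)).hasSum

theorem HasOrliczThomas.summable (hOT : HasOrliczThomas (Y : Set (X →L[ℝ] ℝ)))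
    (hY : ∀ x : X, (∀ f ∈ Y, f x = 0) → x = 0) {z : ℕ → X}
    (hsum : ∀ y ∈ Y, Summable fun k => y (z k))
    (hrep : ∀ S : Set ℕ, ∃ x : X, ∀ y ∈ Y, y x = ∑' k : S, y (z k)) : Summable z := by
  choose ν hν using hrep
  have hνca : @CountablyAdditive ℕ X ⊤ _ _ ν := hOT ℕ ⊤ ν fun y hy => by
    simpa only [hν _ y hy] using countablyAdditive_tsum_subtype (hsum y hy)
  have hνz (k : ℕ) : ν {k} = z k :=
    eq_of_forall_mem_eq hY fun y hy => (hν {k} y hy).trans (tsum_singleton k fun k => y (z k))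
  simpa only [hνz] using (hνca (fun k => {k}) (fun _ => trivial) fun i j hij =>
    disjoint_singleton.2 hij).summable

end OrliczThomas

/-- The `σ(X, Y)`-closed convex hull of a bounded set `C`, described as the set of points which the
support function of `C` dominates on `Y`. -/
def sigmaHull (Y : Submodule ℝ (X →L[ℝ] ℝ)) (C : Set X) : Set X :=
  {x | ∀ y ∈ Y, y x ≤ supportFn y C}

/-- The conclusion of Krein's theorem for `C` in dual form: in the algebraic dual of `Y`, the weak
closed convex hull of `C` consists of evaluations at points of `X`. -/
def HasKreinProperty (Y : Submodule ℝ (X →L[ℝ] ℝ)) (C : Set X) : Prop :=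
  ∀ φ : Y →ₗ[ℝ] ℝ, (∀ y : Y, φ y ≤ supportFn y C) → ∃ x : X, ∀ y : Y, (y : X →L[ℝ] ℝ) x = φ y

section SigmaHull

variable {Y : Submodule ℝ (X →L[ℝ] ℝ)} {C C' : Set X}

lemma subset_sigmaHull (Y : Submodule ℝ (X →L[ℝ] ℝ)) (hC : Bornology.IsBounded C) :
    C ⊆ sigmaHull Y C :=
  fun _ hx y _ => le_supportFn_s13 hC y hx

lemma abs_apply_le_of_mem_sigmaHull {x : X} (hx : x ∈ sigmaHull Y C) {y : X →L[ℝ] ℝ}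
    (hy : y ∈ Y) : |y x| ≤ |supportFn y C| + |supportFn (-y) C| := by
  have hneg : -y x ≤ supportFn (-y) C := hx (-y) (Y.neg_mem hy)
  refine abs_le'.2 ⟨?_, ?_⟩
  · linarith [hx y hy, le_abs_self (supportFn y C), abs_nonneg (supportFn (-y) C)]
  · linarith [le_abs_self (supportFn (-y) C), abs_nonneg (supportFn y C)]

theorem hasKreinProperty_of_isCompact_closure [CompleteSpace X]
    (hY : ∀ x : X, (∀ f ∈ Y, f x = 0) → x = 0)
    (hqc : ∀ S : Set X, @IsClosed X (mackeyTop Y) S →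
      @Bornology.IsVonNBounded ℝ X _ _ _ (mackeyTop Y) S →
      @IsComplete X (mackeyUniformity Y) S)
    (hne : C.Nonempty) (hbd : Bornology.IsBounded C)
    (hcpt : @IsCompact X (sigmaTop (Y : Set (X →L[ℝ] ℝ)))
      (@closure X (sigmaTop (Y : Set (X →L[ℝ] ℝ))) C)) : HasKreinProperty Y C := by
  intro φ hφ
  obtain ⟨ψ, rfl⟩ := φ.exists_extend
  obtain ⟨x, hx⟩ := exists_eq_of_le_supportFn hY hqc hne hbd hcpt fun y hy => hφ ⟨y, hy⟩
  exact ⟨x, fun y => hx y y.2⟩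

theorem exists_add_eq_of_le_supportFn_add (hY : ∀ x : X, (∀ f ∈ Y, f x = 0) → x = 0)
    (hne : C.Nonempty) (hne' : C'.Nonempty) (hbd : Bornology.IsBounded C)
    (hbd' : Bornology.IsBounded C') (hC : HasKreinProperty Y C) (hC' : HasKreinProperty Y C')
    {x : X} (hx : ∀ y ∈ Y, y x ≤ supportFn y C + supportFn y C') :
    ∃ x₁ ∈ sigmaHull Y C, ∃ x₂ ∈ sigmaHull Y C', x₁ + x₂ = x := by
  let evalx : Y →ₗ[ℝ] ℝ :=
    { toFun y := y.1 x
      map_add' _ _ := rfl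
      map_smul' _ _ := rfl }
  obtain ⟨φ₁, φ₂, hφ₁, hφ₂, hφ⟩ := exists_add_eq_of_le_sublinear_add evalx
    (p := fun y : Y => supportFn y C) (q := fun y : Y => supportFn y C')
    (fun _ hc _ => supportFn_smul_s13 hc.le) (fun _ _ => supportFn_add_le hne hbd)
    (fun _ hc _ => supportFn_smul_s13 hc.le) (fun _ _ => supportFn_add_le hne' hbd')
    fun y => hx y y.2
  obtain ⟨x₁, hx₁⟩ := hC φ₁ hφ₁
  obtain ⟨x₂, hx₂⟩ := hC' φ₂ hφ₂
  refine ⟨x₁, fun y hy => (hx₁ ⟨y, hy⟩).trans_le (hφ₁ _), x₂,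
    fun y hy => (hx₂ ⟨y, hy⟩).trans_le (hφ₂ _), eq_of_forall_mem_eq hY fun y hy => ?_⟩
  calc y (x₁ + x₂) = φ₁ ⟨y, hy⟩ + φ₂ ⟨y, hy⟩ :=
        (map_add y x₁ x₂).trans (congrArg₂ (· + ·) (hx₁ ⟨y, hy⟩) (hx₂ ⟨y, hy⟩))
    _ = y x := LinearMap.congr_fun hφ ⟨y, hy⟩

end SigmaHull

/-- A set-valued map with bounded non-empty values that have the Krein property over `Y`, whose
support maps are countably additive for the functionals in `Y`. -/
structure IsKreinMultimeasure {Ω : Type*} [MeasurableSpace Ω] (Y : Submodule ℝ (X →L[ℝ] ℝ))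
    (M : Set Ω → Set X) : Prop where
  nonempty : ∀ A, MeasurableSet A → (M A).Nonempty
  isBounded : ∀ A, MeasurableSet A → Bornology.IsBounded (M A)
  hasKreinProperty : ∀ A, MeasurableSet A → HasKreinProperty Y (M A)
  countablyAdditive : ∀ y ∈ Y, CountablyAdditive fun A => supportFn y (M A)

namespace IsKreinMultimeasure

variable {Ω : Type*} [MeasurableSpace Ω] {Y : Submodule ℝ (X →L[ℝ] ℝ)} {M : Set Ω → Set X}

lemma zero_mem_sigmaHull_empty (hM : IsKreinMultimeasure Y M) : 0 ∈ sigmaHull Y (M ∅) :=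
  fun y hy => by rw [map_zero, (hM.countablyAdditive y hy).empty]

lemma add_mem_sigmaHull_union (hM : IsKreinMultimeasure Y M) {A B : Set Ω}
    (hA : MeasurableSet A) (hB : MeasurableSet B) (hAB : Disjoint A B) {x x' : X}
    (hx : x ∈ sigmaHull Y (M A)) (hx' : x' ∈ sigmaHull Y (M B)) :
    x + x' ∈ sigmaHull Y (M (A ∪ B)) := by
  intro y hy
  rw [map_add, (hM.countablyAdditive y hy).union hA hB hAB]
  exact add_le_add (hx y hy) (hx' y hy)

lemma exists_add_eq_of_mem_sigmaHull_union (hM : IsKreinMultimeasure Y M)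
    (hY : ∀ x : X, (∀ f ∈ Y, f x = 0) → x = 0) {A B : Set Ω} (hA : MeasurableSet A)
    (hB : MeasurableSet B) (hAB : Disjoint A B) {x : X} (hx : x ∈ sigmaHull Y (M (A ∪ B))) :
    ∃ x₁ ∈ sigmaHull Y (M A), ∃ x₂ ∈ sigmaHull Y (M B), x₁ + x₂ = x :=
  exists_add_eq_of_le_supportFn_add hY (hM.nonempty A hA) (hM.nonempty B hB) (hM.isBounded A hA)
    (hM.isBounded B hB) (hM.hasKreinProperty A hA) (hM.hasKreinProperty B hB) fun y hy =>
      (hx y hy).trans_eq ((hM.countablyAdditive y hy).union hA hB hAB)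

lemma summable_apply (hM : IsKreinMultimeasure Y M) {A : ℕ → Set Ω}
    (hA : ∀ k, MeasurableSet (A k)) (hdisj : Pairwise (Function.onFun Disjoint A)) {z : ℕ → X}
    (hz : ∀ k, z k ∈ sigmaHull Y (M (A k))) {y : X →L[ℝ] ℝ} (hy : y ∈ Y) :
    Summable fun k => y (z k) :=
  .of_norm_bounded ((hM.countablyAdditive y hy A hA hdisj).summable.abs.add
    (hM.countablyAdditive (-y) (Y.neg_mem hy) A hA hdisj).summable.abs)
    fun k => abs_apply_le_of_mem_sigmaHull (hz k) hy

theorem summable_of_mem_sigmaHull (hM : IsKreinMultimeasure Y M)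
    (hY : ∀ x : X, (∀ f ∈ Y, f x = 0) → x = 0) (hOT : HasOrliczThomas (Y : Set (X →L[ℝ] ℝ)))
    {A : ℕ → Set Ω} (hA : ∀ k, MeasurableSet (A k))
    (hdisj : Pairwise (Function.onFun Disjoint A)) {z : ℕ → X}
    (hz : ∀ k, z k ∈ sigmaHull Y (M (A k))) : Summable z := by
  have hsum (y : Y) : Summable fun k => y.1 (z k) := hM.summable_apply hA hdisj hz y.2
  refine hOT.summable hY (fun y hy => hsum ⟨y, hy⟩) fun S => ?_
  let φ : Y →ₗ[ℝ] ℝ :=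
    { toFun y := ∑' k : S, y.1 (z k)
      map_add' y y' := ((hsum y).subtype S).tsum_add ((hsum y').subtype S)
      map_smul' _ _ := tsum_mul_left }
  have hφ (y : Y) : φ y ≤ supportFn y.1 (M (⋃ k : S, A k)) :=
    hasSum_le (fun k : S => hz k y y.2)
      (Summable.hasSum (f := fun k : S => y.1 (z k)) ((hsum y).subtype S))
      ((hM.countablyAdditive y y.2).hasSum_iUnion (fun k : S => hA k)
        (hdisj.comp_of_injective Subtype.val_injective))
  obtain ⟨x, hx⟩ := hM.hasKreinProperty _ (.iUnion fun k : S => hA k) φ hφ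
  exact ⟨x, fun y hy => hx ⟨y, hy⟩⟩

section Antitone

variable {B : ℕ → Set Ω}

lemma tendsto_apply_zero (hM : IsKreinMultimeasure Y M) (hB : ∀ n, MeasurableSet (B n))
    (hanti : Antitone B) (hempty : ⋂ n, B n = ∅) {r : ℕ → X}
    (hr : ∀ n, r n ∈ sigmaHull Y (M (B n))) {y : X →L[ℝ] ℝ} (hy : y ∈ Y) :
    Tendsto (fun n => y (r n)) atTop (𝓝 0) := by
  have hbound := ((hM.countablyAdditive y hy).tendsto_zero hB hanti hempty).abs.add
    ((hM.countablyAdditive (-y) (Y.neg_mem hy)).tendsto_zero hB hanti hempty).abs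
  rw [abs_zero, add_zero] at hbound
  exact squeeze_zero_norm (fun n => abs_apply_le_of_mem_sigmaHull (hr n) hy) hbound

lemma exists_seq_sum_add_eq (hM : IsKreinMultimeasure Y M)
    (hY : ∀ x : X, (∀ f ∈ Y, f x = 0) → x = 0) (hB : ∀ n, MeasurableSet (B n))
    (hanti : Antitone B) {x : X} (hx : x ∈ sigmaHull Y (M (B 0))) :
    ∃ z r : ℕ → X, (∀ k, z k ∈ sigmaHull Y (M (B k \ B (k + 1)))) ∧
      (∀ k, r k ∈ sigmaHull Y (M (B k))) ∧ ∀ k, ∑ i ∈ Finset.range k, z i + r k = x := by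
  have hsplit (k : ℕ) (r : sigmaHull Y (M (B k))) : ∃ z ∈ sigmaHull Y (M (B k \ B (k + 1))),
      ∃ r' : sigmaHull Y (M (B (k + 1))), z + r' = (r : X) := by
    obtain ⟨z, hz, r', hr', hadd⟩ := hM.exists_add_eq_of_mem_sigmaHull_union hY (x := r)
      ((hB k).diff (hB (k + 1))) (hB (k + 1)) disjoint_sdiff_left
      (by rw [sdiff_union_of_subset (hanti k.le_succ)]; exact r.2)
    exact ⟨z, hz, ⟨r', hr'⟩, hadd⟩
  choose z hz next hadd using hsplit
  let r : (k : ℕ) → sigmaHull Y (M (B k)) := fun k => Nat.rec ⟨x, hx⟩ next k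
  refine ⟨fun k => z k (r k), fun k => (r k).1, fun k => hz k _, fun k => (r k).2, fun k => ?_⟩
  induction k with
  | zero => simp [r]
  | succ k ih => rw [Finset.sum_range_succ, add_assoc, ← ih]; exact congrArg _ (hadd k (r k))

lemma sum_range_mem_sigmaHull (hM : IsKreinMultimeasure Y M) (hB : ∀ n, MeasurableSet (B n))
    (hanti : Antitone B) {z : ℕ → X} (hz : ∀ k, z k ∈ sigmaHull Y (M (B k \ B (k + 1)))) (k : ℕ) :
    ∑ i ∈ Finset.range k, z i ∈ sigmaHull Y (M (B 0 \ B k)) := by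
  induction k with
  | zero => simpa using hM.zero_mem_sigmaHull_empty
  | succ k ih =>
    rw [Finset.sum_range_succ,
      ← sdiff_union_sdiff_cancel (hanti k.zero_le) (hanti k.le_succ)]
    exact hM.add_mem_sigmaHull_union ((hB 0).diff (hB k)) ((hB k).diff (hB (k + 1)))
      (disjoint_sdiff_left.mono_right sdiff_subset) ih (hz k)

theorem exists_mem_sigmaHull_sdiff_lt_norm (hM : IsKreinMultimeasure Y M)
    (hY : ∀ x : X, (∀ f ∈ Y, f x = 0) → x = 0) (hOT : HasOrliczThomas (Y : Set (X →L[ℝ] ℝ)))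
    (hB : ∀ n, MeasurableSet (B n)) (hanti : Antitone B) (hempty : ⋂ n, B n = ∅) {x : X}
    (hx : x ∈ sigmaHull Y (M (B 0))) {δ : ℝ} (hδ : δ < ‖x‖) :
    ∃ k, ∃ z ∈ sigmaHull Y (M (B 0 \ B k)), δ < ‖z‖ := by
  obtain ⟨z, r, hz, hr, hzr⟩ := hM.exists_seq_sum_add_eq hY hB hanti hx
  have hdisj : Pairwise (Function.onFun Disjoint fun k => B k \ B (k + 1)) :=
    (pairwise_disjoint_on _).2 fun i j hij =>
      disjoint_sdiff_left.mono_right (sdiff_subset.trans (hanti hij))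
  have hlim := (hM.summable_of_mem_sigmaHull hY hOT (fun k => (hB k).diff (hB (k + 1)))
    hdisj hz).hasSum.tendsto_sum_nat
  have hsum : ∑' k, z k = x := by
    refine eq_of_forall_mem_eq hY fun y hy => ?_
    have hadd := ((y.continuous.tendsto _).comp hlim).add
      (hM.tendsto_apply_zero hB hanti hempty hr hy)
    simp only [Function.comp_def, ← map_add, hzr, add_zero] at hadd
    exact tendsto_nhds_unique hadd tendsto_const_nhds
  rw [hsum] at hlim
  obtain ⟨k, hk⟩ := (hlim.norm.eventually (lt_mem_nhds hδ)).exists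
  exact ⟨k, _, hM.sum_range_mem_sigmaHull hB hanti hz k, hk⟩

theorem tendsto_zero_of_mem_sigmaHull (hM : IsKreinMultimeasure Y M)
    (hY : ∀ x : X, (∀ f ∈ Y, f x = 0) → x = 0) (hOT : HasOrliczThomas (Y : Set (X →L[ℝ] ℝ)))
    (hB : ∀ n, MeasurableSet (B n)) (hanti : Antitone B) (hempty : ⋂ n, B n = ∅) {x : ℕ → X}
    (hx : ∀ n, x n ∈ sigmaHull Y (M (B n))) : Tendsto x atTop (𝓝 0) := by
  rw [Metric.tendsto_atTop]
  by_contra! ⟨ε, hε, hfreq⟩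
  -- Otherwise a gliding hump yields disjoint blocks `B a \ B b` and points of norm `> ε / 2` in the
  -- hulls of their values; these points would be summable.
  let P : ℕ × ℕ × X → Prop := fun p =>
    p.2.2 ∈ sigmaHull Y (M (B p.1 \ B p.2.1)) ∧ ε / 2 < ‖p.2.2‖
  have hnext (s : Finset (ℕ × ℕ × X)) (_ : ∀ p ∈ s, P p) : ∃ q, P q ∧ ∀ p ∈ s, p.2.1 ≤ q.1 := by
    obtain ⟨a, hsa, ha⟩ := hfreq (s.sup (·.2.1))
    rw [dist_zero_right] at ha
    obtain ⟨k, z, hz, hzε⟩ := hM.exists_mem_sigmaHull_sdiff_lt_norm hY hOT (B := fun i => B (a + i))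
      (fun i => hB _) (fun i j hij => hanti (by lia))
      (by simpa only [add_comm a, ← iInf_eq_iInter, hanti.iInf_nat_add a] using hempty)
      (hx a) ((half_lt_self hε).trans_le ha)
    exact ⟨(a, a + k, z), ⟨hz, hzε⟩, fun p hp => (Finset.le_sup (f := (·.2.1)) hp).trans hsa⟩
  obtain ⟨p, hpP, hpr⟩ := exists_seq_of_forall_finset_exists P (fun p q => p.2.1 ≤ q.1) hnext
  have hdisj : Pairwise (Function.onFun Disjoint fun n => B (p n).1 \ B (p n).2.1) :=
    (pairwise_disjoint_on _).2 fun i j hij =>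
      disjoint_sdiff_left.mono_right (sdiff_subset.trans (hanti (hpr i j hij)))
  have hzero := (hM.summable_of_mem_sigmaHull hY hOT (fun n => (hB _).diff (hB _)) hdisj
    fun n => (hpP n).1).tendsto_atTop_zero.norm
  rw [norm_zero] at hzero
  obtain ⟨n, hn⟩ := (hzero.eventually (gt_mem_nhds (half_pos hε))).exists
  exact lt_asymm hn (hpP n).2

end Antitone

lemma exists_seq_near_supportFn (hM : IsKreinMultimeasure Y M) {A : ℕ → Set Ω}
    (hA : ∀ n, MeasurableSet (A n)) (f : X →L[ℝ] ℝ) :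
    ∃ x : ℕ → X, (∀ n, x n ∈ sigmaHull Y (M (A n))) ∧
      (∀ n, 0 ≤ supportFn f (M (A n)) - f (x n)) ∧
      ∀ n, supportFn f (M (A n)) - f (x n) ≤ (1 / 2) ^ n := by
  have hnear (n : ℕ) : ∃ x ∈ M (A n), supportFn f (M (A n)) - (1 / 2) ^ n < f x :=
    exists_lt_of_lt_supportFn (hM.nonempty _ (hA n)) (sub_lt_self _ (by positivity))
  choose x hx hlt using hnear
  exact ⟨x, fun n => subset_sigmaHull Y (hM.isBounded _ (hA n)) (hx n),
    fun n => sub_nonneg.2 (le_supportFn_s13 (hM.isBounded _ (hA n)) f (hx n)),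
    fun n => by linarith [hlt n]⟩

theorem countablyAdditive_of_finitelyAdditive (hM : IsKreinMultimeasure Y M)
    (hY : ∀ x : X, (∀ f ∈ Y, f x = 0) → x = 0) (hOT : HasOrliczThomas (Y : Set (X →L[ℝ] ℝ)))
    {f : X →L[ℝ] ℝ} (hf : FinitelyAdditive fun A => supportFn f (M A)) :
    CountablyAdditive fun A => supportFn f (M A) := by
  refine hf.countablyAdditive (fun A hA hdisj => ?_) fun B hB hanti hempty => ?_
  · obtain ⟨x, hx, hnonneg, hle⟩ := hM.exists_seq_near_supportFn hA f
    have hfx := f.summable (hM.summable_of_mem_sigmaHull hY hOT hA hdisj hx)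
    simpa only [sub_add_cancel] using
      (summable_geometric_two.of_nonneg_of_le hnonneg hle).add hfx
  · obtain ⟨x, hx, hnonneg, hle⟩ := hM.exists_seq_near_supportFn hB f
    have hfx := (f.continuous.tendsto 0).comp
      (hM.tendsto_zero_of_mem_sigmaHull hY hOT hB hanti hempty hx)
    simpa only [Function.comp_def, sub_add_cancel, map_zero, add_zero] using
      (squeeze_zero hnonneg hle summable_geometric_two.tendsto_atTop_zero).add hfx

end IsKreinMultimeasure

end Multimeasure

/-- Let `X` be a Banach space and `Y ⊆ X*` a total linear subspace
with the Orlicz–Thomas property such that `(X, μ(X,Y))` is quasi-complete. If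
`M : Σ → b(X)` has relatively `σ(X,Y)`-compact values, `s(x*, M)` is countably additive
for every `x* ∈ Y`, and `s(x*, M)` is finitely additive for every `x* ∈ X*`, then `M`
is a multimeasure: `s(x*, M)` is countably additive for every `x* ∈ X*`. -/
theorem statement13 {Ω X : Type*} [MeasurableSpace Ω]
    [NormedAddCommGroup X] [NormedSpace ℝ X] [CompleteSpace X]
    (Y : Submodule ℝ (X →L[ℝ] ℝ))
    (hYtotal : ∀ x : X, (∀ f ∈ Y, f x = 0) → x = 0)
    (hOT : HasOrliczThomas (Y : Set (X →L[ℝ] ℝ)))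
    (hqc : ∀ S : Set X, @IsClosed X (mackeyTop Y) S →
      @Bornology.IsVonNBounded ℝ X _ _ _ (mackeyTop Y) S →
      @IsComplete X (mackeyUniformity Y) S)
    (M : Set Ω → Set X)
    (hne : ∀ A : Set Ω, MeasurableSet A → (M A).Nonempty)
    (hbd : ∀ A : Set Ω, MeasurableSet A → Bornology.IsBounded (M A))
    (hcpt : ∀ A : Set Ω, MeasurableSet A →
      @IsCompact X (sigmaTop (Y : Set (X →L[ℝ] ℝ)))
        (@closure X (sigmaTop (Y : Set (X →L[ℝ] ℝ))) (M A)))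
    (hca : ∀ f ∈ Y, CountablyAdditive (fun A => supportFn f (M A)))
    (hfa : ∀ f : X →L[ℝ] ℝ, FinitelyAdditive (fun A => supportFn f (M A))) :
    ∀ f : X →L[ℝ] ℝ, CountablyAdditive (fun A => supportFn f (M A)) := by
  have hM : IsKreinMultimeasure Y M :=
    { nonempty := hne
      isBounded := hbd
      hasKreinProperty A hA :=
        hasKreinProperty_of_isCompact_closure hYtotal hqc (hne A hA) (hbd A hA) (hcpt A hA)
      countablyAdditive := hca }
  exact fun f => hM.countablyAdditive_of_finitelyAdditive hYtotal hOT (hfa f)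
end
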